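/- arXiv:2307.03594 — 8 statements merged into one kernel-verified Lean document; each statement's English description precedes it below -/
import Mathlib

section
/- Let X be a real random variable and λ > 0. If X has the same distribution as −λX (i.e., the law of X equals the law of ω ↦ −λ·X(ω)), then λ = 1 or X = 0 almost surely. -/
open MeasureTheory

theorem eq_one_or_ae_zero_of_distrib_eq_neg_smul
    {Ω : Type*} [MeasurableSpace Ω] (μ : Measure Ω) [IsProbabilityMeasure μ]
    (X : Ω → ℝ) (hX : Measurable X) (l : ℝ) (hl : 0 < l)
    (h : μ.map X = μ.map (fun ω => -l * X ω)) :
    l = 1 ∨ (X =ᵐ[μ] fun _ => (0 : ℝ)) := by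
  rw [or_iff_not_imp_left]
  intro hl1
  have hY : Measurable fun ω => -l * X ω := hX.const_mul _
  have hf : Measurable fun x : ℝ => Real.arctan |x| := by fun_prop
  have hint (Z : Ω → ℝ) (hZ : Measurable Z) : Integrable (fun ω => Real.arctan |Z ω|) μ :=
    .of_bound (hf.comp hZ).aestronglyMeasurable (Real.pi / 2) <| .of_forall fun ω =>
      abs_le.2 ⟨(Real.neg_pi_div_two_lt_arctan _).le, (Real.arctan_lt_pi_div_two _).le⟩
  have heq : ∫ ω, Real.arctan |X ω| ∂μ = ∫ ω, Real.arctan |-l * X ω| ∂μ := by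
    rw [← integral_map hX.aemeasurable hf.aestronglyMeasurable, h,
      integral_map hY.aemeasurable hf.aestronglyMeasurable]
  have habs (ω : Ω) : |-l * X ω| = l * |X ω| := by rw [abs_mul, abs_neg, abs_of_pos hl]
  have hae : (fun ω => Real.arctan |X ω|) =ᵐ[μ] fun ω => Real.arctan |-l * X ω| := by
    rcases le_total l 1 with hle | hle
    · refine ((integral_eq_iff_of_ae_le (hint _ hY) (hint _ hX) <| .of_forall fun ω =>
        Real.arctan_strictMono.monotone ?_).1 heq.symm).symm
      rw [habs]
      exact mul_le_of_le_one_left (abs_nonneg _) hle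
    · refine (integral_eq_iff_of_ae_le (hint _ hX) (hint _ hY) <| .of_forall fun ω =>
        Real.arctan_strictMono.monotone ?_).1 heq
      rw [habs]
      exact le_mul_of_one_le_left (abs_nonneg _) hle
  filter_upwards [hae] with ω hω
  have hfix := Real.arctan_injective hω
  rw [habs] at hfix
  by_contra hne
  exact hl1 (mul_right_cancel₀ (abs_ne_zero.2 hne) (by rw [one_mul, ← hfix]))
end

section
/- Let X, Y, Y', Y'' be real random variables on a common probability space such that Y, Y', Y'' are identically distributed, (X,Y') is countermonotonic, and (X,Y'') is comonotonic. Let g₁, g₂ : ℝ → ℝ be nondecreasing functions such that g₁∘X, g₂∘Y, g₂∘Y', g₂∘Y'' are integrable and both products (g₁∘X)·(g₂∘Y') and (g₁∘X)·(g₂∘Y'') are integrable. Then (g₁∘X)·(g₂∘Y) is integrable and Cov(g₁∘X, g₂∘Y') ≤ Cov(g₁∘X, g₂∘Y) ≤ Cov(g₁∘X, g₂∘Y''). -/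
open MeasureTheory

/-- `(X,Y)` is comonotonic: it has the same joint distribution as a pair of
nondecreasing functions of a single random variable. -/
def Comonotonic {Ω : Type*} [MeasurableSpace Ω] (μ : Measure Ω) (X Y : Ω → ℝ) : Prop :=
  ∃ (Z : Ω → ℝ) (ν₁ ν₂ : ℝ → ℝ), Measurable Z ∧ Monotone ν₁ ∧ Monotone ν₂ ∧
    μ.map (fun ω => (X ω, Y ω)) = μ.map (fun ω => (ν₁ (Z ω), ν₂ (Z ω)))

/-- `(X,Y)` is countermonotonic: it has the same joint distribution as a pair of a
nondecreasing and a nonincreasing function of a single random variable. -/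
def Countermonotonic {Ω : Type*} [MeasurableSpace Ω] (μ : Measure Ω) (X Y : Ω → ℝ) : Prop :=
  ∃ (Z : Ω → ℝ) (ν₁ ν₂ : ℝ → ℝ), Measurable Z ∧ Monotone ν₁ ∧ Antitone ν₂ ∧
    μ.map (fun ω => (X ω, Y ω)) = μ.map (fun ω => (ν₁ (Z ω), ν₂ (Z ω)))

/-- Covariance `Cov(U,V) = E[UV] − E[U]E[V]`. -/
noncomputable def covar {Ω : Type*} [MeasurableSpace Ω] (μ : Measure Ω) (U V : Ω → ℝ) : ℝ :=
  ∫ ω, U ω * V ω ∂μ - (∫ ω, U ω ∂μ) * (∫ ω, V ω ∂μ)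

section Rearrangement

variable {Ω : Type*} [MeasurableSpace Ω] {μ : Measure Ω} {U V W : Ω → ℝ}

lemma map_comp_eq_of_map_eq {β γ : Type*} [MeasurableSpace β] [MeasurableSpace γ] {f g : Ω → β}
    (h : μ.map f = μ.map g) (hf : Measurable f) (hg : Measurable g) {φ : β → γ}
    (hφ : Measurable φ) : μ.map (fun ω => φ (f ω)) = μ.map (fun ω => φ (g ω)) := by
  have h2 := congrArg (Measure.map φ) h
  rwa [Measure.map_map hφ hf, Measure.map_map hφ hg] at h2

lemma Comonotonic.comp (h : Comonotonic μ U W) (hU : Measurable U) (hW : Measurable W)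
    {f g : ℝ → ℝ} (hf : Monotone f) (hg : Monotone g) :
    Comonotonic μ (fun ω => f (U ω)) (fun ω => g (W ω)) := by
  obtain ⟨Z, a, b, hZ, ha, hb, h⟩ := h
  refine ⟨Z, f ∘ a, g ∘ b, hZ, hf.comp ha, hg.comp hb, ?_⟩
  exact map_comp_eq_of_map_eq h (hU.prodMk hW)
    ((ha.measurable.comp hZ).prodMk (hb.measurable.comp hZ))
    (hf.measurable.prodMap hg.measurable)

lemma Countermonotonic.comp (h : Countermonotonic μ U W) (hU : Measurable U) (hW : Measurable W)
    {f g : ℝ → ℝ} (hf : Monotone f) (hg : Monotone g) :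
    Countermonotonic μ (fun ω => f (U ω)) (fun ω => g (W ω)) := by
  obtain ⟨Z, a, b, hZ, ha, hb, h⟩ := h
  refine ⟨Z, f ∘ a, g ∘ b, hZ, hf.comp ha, hg.comp_antitone hb, ?_⟩
  exact map_comp_eq_of_map_eq h (hU.prodMk hW)
    ((ha.measurable.comp hZ).prodMk (hb.measurable.comp hZ))
    (hf.measurable.prodMap hg.measurable)

lemma Comonotonic.neg_right (h : Comonotonic μ U W) (hU : Measurable U) (hW : Measurable W) :
    Countermonotonic μ U (fun ω => -W ω) := by
  obtain ⟨Z, a, b, hZ, ha, hb, h⟩ := h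
  refine ⟨Z, a, fun z => -b z, hZ, ha, hb.neg, ?_⟩
  exact map_comp_eq_of_map_eq h (hU.prodMk hW)
    ((ha.measurable.comp hZ).prodMk (hb.measurable.comp hZ))
    (measurable_id.prodMap measurable_neg)

lemma Countermonotonic.neg_right (h : Countermonotonic μ U W) (hU : Measurable U)
    (hW : Measurable W) : Comonotonic μ U (fun ω => -W ω) := by
  obtain ⟨Z, a, b, hZ, ha, hb, h⟩ := h
  refine ⟨Z, a, fun z => -b z, hZ, ha, hb.neg, ?_⟩
  exact map_comp_eq_of_map_eq h (hU.prodMk hW)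
    ((ha.measurable.comp hZ).prodMk (hb.measurable.comp hZ))
    (measurable_id.prodMap measurable_neg)

lemma Comonotonic.neg_neg (h : Comonotonic μ U W) (hU : Measurable U) (hW : Measurable W) :
    Comonotonic μ (fun ω => -U ω) (fun ω => -W ω) := by
  obtain ⟨Z, a, b, hZ, ha, hb, h⟩ := h
  refine ⟨fun ω => -Z ω, fun z => -a (-z), fun z => -b (-z), hZ.neg,
    fun x y hxy => neg_le_neg (ha (neg_le_neg hxy)),
    fun x y hxy => neg_le_neg (hb (neg_le_neg hxy)), ?_⟩
  simpa using map_comp_eq_of_map_eq h (hU.prodMk hW)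
    ((ha.measurable.comp hZ).prodMk (hb.measurable.comp hZ))
    (measurable_neg.prodMap measurable_neg)

lemma measure_preimage_eq_of_map_eq {β : Type*} [MeasurableSpace β] {f g : Ω → β}
    (h : μ.map f = μ.map g) (hf : Measurable f) (hg : Measurable g) {s : Set β}
    (hs : MeasurableSet s) : μ (f ⁻¹' s) = μ (g ⁻¹' s) := by
  rw [← Measure.map_apply hf hs, h, Measure.map_apply hg hs]

/-- Among all couplings with given marginals, a comonotonic one maximises the joint survival
function. -/
lemma Comonotonic.measure_quadrant_le (h : Comonotonic μ U W) (hU : Measurable U)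
    (hV : Measurable V) (hW : Measurable W) (hVW : μ.map V = μ.map W) (s t : ℝ) :
    μ (U ⁻¹' Set.Ioi s ∩ V ⁻¹' Set.Ioi t) ≤ μ (U ⁻¹' Set.Ioi s ∩ W ⁻¹' Set.Ioi t) := by
  obtain ⟨Z, a, b, hZ, ha, hb, h⟩ := h
  have key {S T : Set ℝ} (hS : MeasurableSet S) (hT : MeasurableSet T) :
      μ (U ⁻¹' S ∩ W ⁻¹' T) = μ ((a ∘ Z) ⁻¹' S ∩ (b ∘ Z) ⁻¹' T) :=
    measure_preimage_eq_of_map_eq h (hU.prodMk hW)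
      ((ha.measurable.comp hZ).prodMk (hb.measurable.comp hZ)) (hS.prod hT)
  have e1 := key (measurableSet_Ioi (a := s)) (measurableSet_Ioi (a := t))
  have e2 := key (measurableSet_Ioi (a := s)) MeasurableSet.univ
  have e3 := key MeasurableSet.univ (measurableSet_Ioi (a := t))
  simp only [Set.preimage_univ, Set.inter_univ, Set.univ_inter] at e2 e3
  have e4 := measure_preimage_eq_of_map_eq hVW hV hW (measurableSet_Ioi (a := t))
  by_cases hc : ∀ z, s < a z → t < b z
  · calc _ ≤ μ (U ⁻¹' Set.Ioi s) := measure_mono Set.inter_subset_left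
      _ = _ := e2
      _ ≤ _ := measure_mono (Set.subset_inter subset_rfl fun ω hω => hc _ hω)
      _ = _ := e1.symm
  · push Not at hc
    obtain ⟨w, hw, hw'⟩ := hc
    have hc : ∀ z, t < b z → s < a z := fun z hz =>
      hw.trans_le (ha (le_of_lt (hb.reflect_lt (hw'.trans_lt hz))))
    calc _ ≤ μ (V ⁻¹' Set.Ioi t) := measure_mono Set.inter_subset_right
      _ = _ := e4.trans e3
      _ ≤ _ := measure_mono (Set.subset_inter (fun ω hω => hc _ hω) subset_rfl)
      _ = _ := e1.symm

/-- Among all couplings with given marginals, a countermonotonic one minimises the joint survival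
function. -/
lemma Countermonotonic.measure_quadrant_le [IsFiniteMeasure μ] (h : Countermonotonic μ U W)
    (hU : Measurable U) (hV : Measurable V) (hW : Measurable W) (hVW : μ.map V = μ.map W)
    (s t : ℝ) :
    μ (U ⁻¹' Set.Ioi s ∩ W ⁻¹' Set.Ioi t) ≤ μ (U ⁻¹' Set.Ioi s ∩ V ⁻¹' Set.Ioi t) := by
  obtain ⟨Z, a, b, hZ, ha, hb, h⟩ := h
  have key {S T : Set ℝ} (hS : MeasurableSet S) (hT : MeasurableSet T) :
      μ (U ⁻¹' S ∩ W ⁻¹' T) = μ ((a ∘ Z) ⁻¹' S ∩ (b ∘ Z) ⁻¹' T) :=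
    measure_preimage_eq_of_map_eq h (hU.prodMk hW)
      ((ha.measurable.comp hZ).prodMk (hb.measurable.comp hZ)) (hS.prod hT)
  have e1 := key (measurableSet_Ioi (a := s)) (measurableSet_Ioi (a := t))
  have e4 := measure_preimage_eq_of_map_eq hVW hV hW (measurableSet_Ioi (a := t))
  by_cases hc : ∃ z, s < a z ∧ t < b z
  · obtain ⟨w, hw, hw'⟩ := hc
    have e5 := key (measurableSet_Iic (a := s)) (measurableSet_Iic (a := t))
    have hcover : μ (U ⁻¹' Set.Ioi s ∪ W ⁻¹' Set.Ioi t) = μ Set.univ := by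
      rw [← measure_add_measure_compl
        ((hU measurableSet_Ioi).union (hW measurableSet_Ioi))]
      have hz : (U ⁻¹' Set.Ioi s ∪ W ⁻¹' Set.Ioi t)ᶜ
          = U ⁻¹' Set.Iic s ∩ W ⁻¹' Set.Iic t := by
        ext ω; simp
      have hempty : (a ∘ Z) ⁻¹' Set.Iic s ∩ (b ∘ Z) ⁻¹' Set.Iic t = ∅ := by
        ext ω
        simp only [Set.mem_inter_iff, Set.mem_preimage, Function.comp_apply, Set.mem_Iic, Set.mem_empty_iff_false,
          iff_false, not_and, not_le]
        exact fun hω => hw'.trans_le (hb (le_of_lt (ha.reflect_lt (hω.trans_lt hw))))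
      rw [hz, e5, hempty, measure_empty, add_zero]
    have hW' := measure_union_add_inter (μ := μ) (U ⁻¹' Set.Ioi s)
      (hW (measurableSet_Ioi (a := t)))
    have hV' := measure_union_add_inter (μ := μ) (U ⁻¹' Set.Ioi s)
      (hV (measurableSet_Ioi (a := t)))
    rw [e4, ← hW', hcover] at hV'
    have hle : μ (U ⁻¹' Set.Ioi s ∪ V ⁻¹' Set.Ioi t) ≤ μ Set.univ :=
      measure_mono (Set.subset_univ _)
    refine (ENNReal.add_le_add_iff_left (measure_ne_top μ Set.univ)).1 ?_
    rw [← hV']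
    gcongr
  · have hempty : (a ∘ Z) ⁻¹' Set.Ioi s ∩ (b ∘ Z) ⁻¹' Set.Ioi t = ∅ := by
      ext ω
      simp only [Set.mem_inter_iff, Set.mem_preimage, Function.comp_apply, Set.mem_Ioi, Set.mem_empty_iff_false, iff_false]
      exact fun hω => hc ⟨_, hω⟩
    rw [e1, hempty, measure_empty]
    exact zero_le

lemma lintegral_ofReal_mul_ofReal_eq [SFinite μ] (hU : Measurable U) (hV : Measurable V) :
    ∫⁻ ω, ENNReal.ofReal (U ω) * ENNReal.ofReal (V ω) ∂μ =
      ∫⁻ p : ℝ × ℝ, μ {ω | (0 < p.1 ∧ p.1 < U ω) ∧ (0 < p.2 ∧ p.2 < V ω)} := by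
  have hS : MeasurableSet {q : Ω × (ℝ × ℝ) |
      (0 < q.2.1 ∧ q.2.1 < U q.1) ∧ (0 < q.2.2 ∧ q.2.2 < V q.1)} := by
    measurability
  have h1 := Measure.prod_apply (μ := μ) (ν := (volume : Measure (ℝ × ℝ))) hS
  rw [Measure.prod_apply_symm hS] at h1
  refine Eq.trans ?_ h1.symm
  refine lintegral_congr fun ω => ?_
  have : Prod.mk ω ⁻¹' {q : Ω × (ℝ × ℝ) |
      (0 < q.2.1 ∧ q.2.1 < U q.1) ∧ (0 < q.2.2 ∧ q.2.2 < V q.1)}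
      = Set.Ioo 0 (U ω) ×ˢ Set.Ioo 0 (V ω) := rfl
  rw [this, Measure.volume_eq_prod, Measure.prod_prod]
  simp

lemma lintegral_ofReal_mul_ofReal_mono [SFinite μ] (hU : Measurable U) (hV : Measurable V)
    (hW : Measurable W)
    (h : ∀ s t, μ (U ⁻¹' Set.Ioi s ∩ V ⁻¹' Set.Ioi t) ≤ μ (U ⁻¹' Set.Ioi s ∩ W ⁻¹' Set.Ioi t)) :
    ∫⁻ ω, ENNReal.ofReal (U ω) * ENNReal.ofReal (V ω) ∂μ ≤
      ∫⁻ ω, ENNReal.ofReal (U ω) * ENNReal.ofReal (W ω) ∂μ := by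
  rw [lintegral_ofReal_mul_ofReal_eq hU hV, lintegral_ofReal_mul_ofReal_eq hU hW]
  refine lintegral_mono fun p => ?_
  by_cases hp : 0 < p.1 ∧ 0 < p.2
  · simp only [hp.1, hp.2, true_and]
    exact h p.1 p.2
  · have : {ω | (0 < p.1 ∧ p.1 < U ω) ∧ (0 < p.2 ∧ p.2 < V ω)} = ∅ := by
      ext ω
      simp only [Set.mem_ofPred_eq, Set.mem_empty_iff_false, iff_false]
      exact fun hω => hp ⟨hω.1.1, hω.2.1⟩
    simp only [this, measure_empty, zero_le]

lemma lintegral_ofReal_posPart_mul :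
    ∫⁻ ω, ENNReal.ofReal ((U ω)⁺ * (V ω)⁺) ∂μ =
      ∫⁻ ω, ENNReal.ofReal (U ω) * ENNReal.ofReal (V ω) ∂μ := by
  refine lintegral_congr fun ω => ?_
  rw [ENNReal.ofReal_mul (posPart_nonneg _)]
  simp [posPart_def, ENNReal.ofReal_max]

lemma integrable_posPart_mul_posPart (hU : Measurable U) (hV : Measurable V)
    (h : Integrable (fun ω => U ω * V ω) μ) : Integrable (fun ω => (U ω)⁺ * (V ω)⁺) μ := by
  refine h.mono (by simp only [posPart_def]; fun_prop) (.of_forall fun ω => ?_)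
  simp only [norm_mul]
  gcongr <;> simp only [Real.norm_eq_abs, abs_of_nonneg (posPart_nonneg _)] <;>
    exact sup_le (le_abs_self _) (abs_nonneg _)

lemma integrable_posPart_mul_of_lintegral_le (hU : Measurable U) (hV : Measurable V)
    (h : Integrable (fun ω => (U ω)⁺ * (W ω)⁺) μ)
    (hle : ∫⁻ ω, ENNReal.ofReal (U ω) * ENNReal.ofReal (V ω) ∂μ ≤
      ∫⁻ ω, ENNReal.ofReal (U ω) * ENNReal.ofReal (W ω) ∂μ) :
    Integrable (fun ω => (U ω)⁺ * (V ω)⁺) μ := by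
  refine ⟨by simp only [posPart_def]; fun_prop, ?_⟩
  rw [hasFiniteIntegral_iff_ofReal (.of_forall fun ω => by positivity),
    lintegral_ofReal_posPart_mul]
  refine hle.trans_lt ?_
  rw [← lintegral_ofReal_posPart_mul,
    ← hasFiniteIntegral_iff_ofReal (.of_forall fun ω => by positivity)]
  exact h.2

lemma integral_posPart_mul_mono (hU : Measurable U) (hV : Measurable V)
    (hiW : Integrable (fun ω => (U ω)⁺ * (W ω)⁺) μ)
    (hle : ∫⁻ ω, ENNReal.ofReal (U ω) * ENNReal.ofReal (V ω) ∂μ ≤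
      ∫⁻ ω, ENNReal.ofReal (U ω) * ENNReal.ofReal (W ω) ∂μ) :
    ∫ ω, (U ω)⁺ * (V ω)⁺ ∂μ ≤ ∫ ω, (U ω)⁺ * (W ω)⁺ ∂μ := by
  have hiV := integrable_posPart_mul_of_lintegral_le hU hV hiW hle
  rw [integral_eq_lintegral_of_nonneg_ae (.of_forall fun ω => by positivity) hiV.1,
    integral_eq_lintegral_of_nonneg_ae (.of_forall fun ω => by positivity) hiW.1,
    lintegral_ofReal_posPart_mul, lintegral_ofReal_posPart_mul]
  refine ENNReal.toReal_mono ?_ hle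
  rw [← lintegral_ofReal_posPart_mul]
  exact ((hasFiniteIntegral_iff_ofReal (.of_forall fun ω => by positivity)).1 hiW.2).ne

lemma mul_eq_posPart_mul (x y : ℝ) :
    x * y = x⁺ * y⁺ + (-x)⁺ * (-y)⁺ - x⁺ * (-y)⁺ - (-x)⁺ * y⁺ := by
  have hx := posPart_sub_negPart x
  have hy := posPart_sub_negPart y
  rw [posPart_neg, posPart_neg]
  nth_rewrite 1 [← hx, ← hy]
  ring

lemma map_neg_eq (h : μ.map V = μ.map W) (hV : Measurable V) (hW : Measurable W) :
    μ.map (fun ω => -V ω) = μ.map (fun ω => -W ω) :=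
  map_comp_eq_of_map_eq h hV hW measurable_neg

lemma Comonotonic.integrable_posPart_mul [SFinite μ] (h : Comonotonic μ U W) (hU : Measurable U)
    (hV : Measurable V) (hW : Measurable W) (hVW : μ.map V = μ.map W)
    (hi : Integrable (fun ω => U ω * W ω) μ) : Integrable (fun ω => (U ω)⁺ * (V ω)⁺) μ :=
  integrable_posPart_mul_of_lintegral_le hU hV (integrable_posPart_mul_posPart hU hW hi)
    (lintegral_ofReal_mul_ofReal_mono hU hV hW (h.measure_quadrant_le hU hV hW hVW))

/-- Rearrangement inequality: a comonotonic coupling maximises the expected product. -/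
lemma Comonotonic.integral_mul_le [IsFiniteMeasure μ] (h : Comonotonic μ U W) (hU : Measurable U)
    (hV : Measurable V) (hW : Measurable W) (hVW : μ.map V = μ.map W)
    (hiV : Integrable (fun ω => U ω * V ω) μ) (hiW : Integrable (fun ω => U ω * W ω) μ) :
    ∫ ω, U ω * V ω ∂μ ≤ ∫ ω, U ω * W ω ∂μ := by
  have expand {T : Ω → ℝ} (hT : Measurable T) (hi : Integrable (fun ω => U ω * T ω) μ) :
      Integrable (fun ω => (U ω)⁺ * (T ω)⁺) μ ∧ Integrable (fun ω => (-U ω)⁺ * (-T ω)⁺) μ ∧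
      Integrable (fun ω => (U ω)⁺ * (-T ω)⁺) μ ∧ Integrable (fun ω => (-U ω)⁺ * (T ω)⁺) μ ∧
      ∫ ω, U ω * T ω ∂μ = ∫ ω, (U ω)⁺ * (T ω)⁺ ∂μ + ∫ ω, (-U ω)⁺ * (-T ω)⁺ ∂μ
        - ∫ ω, (U ω)⁺ * (-T ω)⁺ ∂μ - ∫ ω, (-U ω)⁺ * (T ω)⁺ ∂μ := by
    have i1 := integrable_posPart_mul_posPart hU hT hi
    have i2 : Integrable (fun ω => (-U ω)⁺ * (-T ω)⁺) μ :=
      integrable_posPart_mul_posPart hU.neg hT.neg (by simpa using hi)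
    have i3 : Integrable (fun ω => (U ω)⁺ * (-T ω)⁺) μ :=
      integrable_posPart_mul_posPart hU hT.neg (by simpa using hi.neg)
    have i4 : Integrable (fun ω => (-U ω)⁺ * (T ω)⁺) μ :=
      integrable_posPart_mul_posPart hU.neg hT (by simpa using hi.neg)
    refine ⟨i1, i2, i3, i4, ?_⟩
    simp_rw [fun ω => mul_eq_posPart_mul (U ω) (T ω)]
    rw [integral_sub ?_ i4, integral_sub ?_ i3, integral_add i1 i2]
    · exact i1.add i2
    · exact (i1.add i2).sub i3
  obtain ⟨-, -, v3, v4, ev⟩ := expand hV hiV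
  obtain ⟨w1, w2, -, -, ew⟩ := expand hW hiW
  have hVW' := map_neg_eq hVW hV hW
  have hn := h.neg_neg hU hW
  have hc := h.neg_right hU hW
  have hcn : Countermonotonic μ (fun ω => -U ω) W := by
    simpa using hn.neg_right hU.neg hW.neg
  have l1 := integral_posPart_mul_mono hU hV w1
    (lintegral_ofReal_mul_ofReal_mono hU hV hW (h.measure_quadrant_le hU hV hW hVW))
  have l2 := integral_posPart_mul_mono hU.neg hV.neg w2
    (lintegral_ofReal_mul_ofReal_mono hU.neg hV.neg hW.neg
      (hn.measure_quadrant_le hU.neg hV.neg hW.neg hVW'))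
  have l3 := integral_posPart_mul_mono hU hW.neg v3
    (lintegral_ofReal_mul_ofReal_mono hU hW.neg hV.neg
      (hc.measure_quadrant_le hU hV.neg hW.neg hVW'))
  have l4 := integral_posPart_mul_mono hU.neg hW v4
    (lintegral_ofReal_mul_ofReal_mono hU.neg hW hV
      (hcn.measure_quadrant_le hU.neg hV hW hVW))
  simp only [Pi.neg_apply] at l2 l3 l4
  linarith

lemma integrable_mul_of_countermonotonic_of_comonotonic [SFinite μ] {V' V'' : Ω → ℝ}
    (hU : Measurable U) (hV : Measurable V) (hV' : Measurable V') (hV'' : Measurable V'')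
    (hid' : μ.map V = μ.map V') (hid'' : μ.map V = μ.map V'')
    (hcm : Countermonotonic μ U V') (hco : Comonotonic μ U V'')
    (hi' : Integrable (fun ω => U ω * V' ω) μ) (hi'' : Integrable (fun ω => U ω * V'' ω) μ) :
    Integrable (fun ω => U ω * V ω) μ := by
  have hc := hcm.neg_right hU hV'
  have hcn : Comonotonic μ (fun ω => -U ω) V' := by
    simpa using hc.neg_neg hU hV'.neg
  have i1 := hco.integrable_posPart_mul hU hV hV'' hid'' hi''
  have i2 := (hco.neg_neg hU hV'').integrable_posPart_mul hU.neg hV.neg hV''.neg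
    (map_neg_eq hid'' hV hV'') (by simpa using hi'')
  have i3 := hc.integrable_posPart_mul hU hV.neg hV'.neg
    (map_neg_eq hid' hV hV') (by simpa using hi'.neg)
  have i4 := hcn.integrable_posPart_mul hU.neg hV hV' hid' (by simpa using hi'.neg)
  exact (((i1.add i2).sub i3).sub i4).congr
    (.of_forall fun ω => (mul_eq_posPart_mul _ _).symm)

end Rearrangement

theorem frechet_hoeffding_covariance_bounds
    {Ω : Type*} [MeasurableSpace Ω] (μ : Measure Ω) [IsProbabilityMeasure μ]
    (X Y Y' Y'' : Ω → ℝ)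
    (hX : Measurable X) (hY : Measurable Y) (hY' : Measurable Y') (hY'' : Measurable Y'')
    (hid' : μ.map Y' = μ.map Y) (hid'' : μ.map Y'' = μ.map Y)
    (hcm : Countermonotonic μ X Y') (hco : Comonotonic μ X Y'')
    (g₁ g₂ : ℝ → ℝ) (hg₁ : Monotone g₁) (hg₂ : Monotone g₂)
    (hiX : Integrable (fun ω => g₁ (X ω)) μ)
    (hiY : Integrable (fun ω => g₂ (Y ω)) μ)
    (hiY' : Integrable (fun ω => g₂ (Y' ω)) μ)
    (hiY'' : Integrable (fun ω => g₂ (Y'' ω)) μ)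
    (hiP' : Integrable (fun ω => g₁ (X ω) * g₂ (Y' ω)) μ)
    (hiP'' : Integrable (fun ω => g₁ (X ω) * g₂ (Y'' ω)) μ) :
    Integrable (fun ω => g₁ (X ω) * g₂ (Y ω)) μ ∧
    covar μ (fun ω => g₁ (X ω)) (fun ω => g₂ (Y' ω))
      ≤ covar μ (fun ω => g₁ (X ω)) (fun ω => g₂ (Y ω)) ∧
    covar μ (fun ω => g₁ (X ω)) (fun ω => g₂ (Y ω))
      ≤ covar μ (fun ω => g₁ (X ω)) (fun ω => g₂ (Y'' ω)) := by
  have mU := hg₁.measurable.comp hX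
  have mV := hg₂.measurable.comp hY
  have mV' := hg₂.measurable.comp hY'
  have mV'' := hg₂.measurable.comp hY''
  have law {T : Ω → ℝ} (hT : Measurable T) (h : μ.map T = μ.map Y) :
      μ.map (g₂ ∘ Y) = μ.map (g₂ ∘ T) :=
    map_comp_eq_of_map_eq h.symm hY hT hg₂.measurable
  have law' := law hY' hid'
  have law'' := law hY'' hid''
  have hcm' := hcm.comp hX hY' hg₁ hg₂
  have hco' := hco.comp hX hY'' hg₁ hg₂
  have hi : Integrable (fun ω => g₁ (X ω) * g₂ (Y ω)) μ :=
    integrable_mul_of_countermonotonic_of_comonotonic mU mV mV' mV'' law' law'' hcm' hco' hiP' hiP''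
  have mean {T : Ω → ℝ} (hT : Measurable T) (h : μ.map T = μ.map Y) :
      ∫ ω, g₂ (T ω) ∂μ = ∫ ω, g₂ (Y ω) ∂μ := by
    rw [← integral_map hT.aemeasurable hg₂.measurable.aestronglyMeasurable, h,
      integral_map hY.aemeasurable hg₂.measurable.aestronglyMeasurable]
  refine ⟨hi, ?_, ?_⟩
  · have hle := (hcm'.neg_right mU mV').integral_mul_le mU mV.neg mV'.neg
      (map_neg_eq law' mV mV') (by simpa using hi.neg) (by simpa using hiP'.neg)
    simp only [Pi.neg_apply, Function.comp_apply, mul_neg, integral_neg, neg_le_neg_iff] at hle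
    simp only [covar, mean hY' hid']
    gcongr
  · have hle := hco'.integral_mul_le mU mV mV'' law'' hi hiP''
    simp only [Function.comp_apply] at hle
    simp only [covar, mean hY'' hid'']
    gcongr
end

section
/- Let X, Y, Y', Y'' be real random variables on a common probability space such that Y, Y', Y'' are identically distributed, (X,Y') is countermonotonic, and (X,Y'') is comonotonic. Let g₁, g₂ : ℝ → ℝ be nondecreasing functions such that g₁∘X, g₂∘Y, g₂∘Y', g₂∘Y'' are integrable and the products (g₁∘X)·(g₂∘Y') and (g₁∘X)·(g₂∘Y'') are integrable. If neither g₁∘X nor g₂∘Y is almost surely constant, then Cov(g₁∘X, g₂∘Y') < 0 < Cov(g₁∘X, g₂∘Y''). -/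
open MeasureTheory

open ProbabilityTheory

/-- A random variable whose law is that of an almost surely constant one is almost surely
constant. -/
theorem ProbabilityTheory.IdentDistrib.ae_eq_const {α β : Type*} [MeasurableSpace α]
    [MeasurableSpace β] {μ : Measure α} {ν : Measure β} {U : α → ℝ} {V : β → ℝ}
    (h : IdentDistrib U V μ ν) {c : ℝ} (hc : V =ᵐ[ν] fun _ => c) : U =ᵐ[μ] fun _ => c :=
  h.symm.ae_mem_snd (measurableSet_singleton c) hc

/-- Chebyshev's association inequality, strict form: similarly ordered random variables which
are not almost surely constant have positive covariance. -/
theorem covar_pos_of_monovary {Ω : Type*} [MeasurableSpace Ω] {μ : Measure Ω}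
    [IsProbabilityMeasure μ] {U V : Ω → ℝ} (hVU : Monovary V U)
    (hU : Integrable U μ) (hV : Integrable V μ) (hUV : Integrable (fun ω => U ω * V ω) μ)
    (hncU : ∀ c : ℝ, ¬ (U =ᵐ[μ] fun _ => c)) (hncV : ∀ c : ℝ, ¬ (V =ᵐ[μ] fun _ => c)) :
    0 < covar μ U V := by
  set m := ∫ ω, U ω ∂μ with hm
  have hUm : Integrable (fun ω => U ω - m) μ := hU.sub (integrable_const m)
  have hUm_zero : ∫ ω, (U ω - m) ∂μ = 0 := by
    rw [integral_sub hU (integrable_const m)]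
    simp [hm]
  have exists_lt : ∃ᵐ ω ∂μ, U ω < m := by
    intro h
    refine hncU m ?_
    have hnonneg : 0 ≤ᵐ[μ] fun ω => U ω - m := by
      filter_upwards [h] with ω hω
      exact sub_nonneg.2 (not_lt.1 hω)
    filter_upwards [(integral_eq_zero_iff_of_nonneg_ae hnonneg hUm).1 hUm_zero] with ω hω
    exact sub_eq_zero.1 hω
  have exists_gt : ∃ᵐ ω ∂μ, m < U ω := by
    intro h
    refine hncU m ?_
    have hnonneg : 0 ≤ᵐ[μ] fun ω => -(U ω - m) := by
      filter_upwards [h] with ω hω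
      exact neg_nonneg.2 (sub_nonpos.2 (not_lt.1 hω))
    have hzero : ∫ ω, -(U ω - m) ∂μ = 0 := by rw [integral_neg, hUm_zero, neg_zero]
    filter_upwards [(integral_eq_zero_iff_of_nonneg_ae hnonneg hUm.neg).1 hzero] with ω hω
    exact sub_eq_zero.1 (neg_eq_zero.1 hω)
  -- a level `c` of `V` separating `{U < m}` from `{m < U}`
  obtain ⟨c, hc_lt, hc_gt⟩ : ∃ c, (∀ ω, U ω < m → V ω ≤ c) ∧ ∀ ω, m < U ω → c ≤ V ω := by
    obtain ⟨a, ha⟩ := exists_lt.exists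
    obtain ⟨b, hb⟩ := exists_gt.exists
    have hle : ∀ ω ω', U ω < m → m < U ω' → V ω ≤ V ω' := fun ω ω' h h' => hVU (h.trans h')
    refine ⟨sSup (V '' {ω | U ω < m}), fun ω hω => le_csSup ⟨V b, ?_⟩ ⟨ω, hω, rfl⟩,
      fun ω hω => csSup_le ⟨V a, a, ha, rfl⟩ ?_⟩
    · rintro _ ⟨x, hx, rfl⟩
      exact hle x b hx hb
    · rintro _ ⟨x, hx, rfl⟩
      exact hle x ω hx hω
  have hnonneg : 0 ≤ fun ω => (U ω - m) * (V ω - c) := by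
    intro ω
    rcases lt_trichotomy (U ω) m with h | h | h
    · exact mul_nonneg_of_nonpos_of_nonpos (sub_nonpos.2 h.le) (sub_nonpos.2 (hc_lt ω h))
    · simp [h]
    · exact mul_nonneg (sub_nonneg.2 h.le) (sub_nonneg.2 (hc_gt ω h))
  have hexpand : (fun ω => (U ω - m) * (V ω - c)) =
      fun ω => (U ω * V ω - m * V ω) - c * (U ω - m) := by
    ext ω
    ring
  have hint' : Integrable (fun ω => U ω * V ω - m * V ω) μ := hUV.sub (hV.const_mul m)
  have hint : Integrable (fun ω => (U ω - m) * (V ω - c)) μ := by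
    rw [hexpand]
    exact hint'.sub (hUm.const_mul c)
  have hcov : covar μ U V = ∫ ω, (U ω - m) * (V ω - c) ∂μ := by
    rw [hexpand, integral_sub hint' (hUm.const_mul c), integral_sub hUV (hV.const_mul m),
      integral_const_mul, integral_const_mul, hUm_zero, mul_zero, sub_zero, covar]
  rw [hcov]
  refine lt_of_le_of_ne (integral_nonneg hnonneg) fun h => hncV c ?_
  have hzero : ∀ᵐ ω ∂μ, U ω = m ∨ V ω = c := by
    filter_upwards [(integral_eq_zero_iff_of_nonneg hnonneg hint).1 h.symm] with ω hω
    simpa [sub_eq_zero] using hω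
  obtain ⟨a, ha, hVa⟩ := (exists_lt.and_eventually hzero).exists
  obtain ⟨b, hb, hVb⟩ := (exists_gt.and_eventually hzero).exists
  filter_upwards [hzero] with ω hω
  rcases hω with hω | hω
  · rw [← hω] at ha hb
    exact le_antisymm ((hVU hb).trans_eq (hVb.resolve_left (hω ▸ hb.ne')))
      ((hVa.resolve_left (hω ▸ ha.ne)).symm.trans_le (hVU ha))
  · exact hω

/-- The covariance of `U` and `V` is positive as soon as `(U, V)` has the law of a pair of
similarly ordered random variables, and neither is almost surely constant. -/
theorem covar_pos_of_identDistrib_monovary {Ω Ω' : Type*} [MeasurableSpace Ω]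
    [MeasurableSpace Ω'] {μ : Measure Ω} {μ' : Measure Ω'} [IsProbabilityMeasure μ']
    {U V : Ω → ℝ} {U' V' : Ω' → ℝ}
    (hlaw : IdentDistrib (fun ω => (U ω, V ω)) (fun ω => (U' ω, V' ω)) μ μ')
    (hVU : Monovary V' U')
    (hU : Integrable U μ) (hV : Integrable V μ) (hUV : Integrable (fun ω => U ω * V ω) μ)
    (hncU : ∀ c : ℝ, ¬ (U =ᵐ[μ] fun _ => c)) (hncV : ∀ c : ℝ, ¬ (V =ᵐ[μ] fun _ => c)) :
    0 < covar μ U V := by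
  have hlawU : IdentDistrib U U' μ μ' := hlaw.comp measurable_fst
  have hlawV : IdentDistrib V V' μ μ' := hlaw.comp measurable_snd
  have hlawUV : IdentDistrib (fun ω => U ω * V ω) (fun ω => U' ω * V' ω) μ μ' :=
    hlaw.comp (measurable_fst.mul measurable_snd)
  have hcov : covar μ U V = covar μ' U' V' := by
    rw [covar, covar, hlawU.integral_eq, hlawV.integral_eq, hlawUV.integral_eq]
  rw [hcov]
  exact covar_pos_of_monovary hVU (hlawU.integrable_iff.1 hU) (hlawV.integrable_iff.1 hV)
    (hlawUV.integrable_iff.1 hUV) (fun c h => hncU c (hlawU.ae_eq_const h))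
    (fun c h => hncV c (hlawV.ae_eq_const h))

theorem covar_neg_right {Ω : Type*} [MeasurableSpace Ω] (μ : Measure Ω) (U V : Ω → ℝ) :
    covar μ U (fun ω => -V ω) = -covar μ U V := by
  simp only [covar, mul_neg, integral_neg]
  ring

theorem frechet_hoeffding_covariance_bounds_strict
    {Ω : Type*} [MeasurableSpace Ω] (μ : Measure Ω) [IsProbabilityMeasure μ]
    (X Y Y' Y'' : Ω → ℝ)
    (hX : Measurable X) (hY : Measurable Y) (hY' : Measurable Y') (hY'' : Measurable Y'')
    (hid' : μ.map Y' = μ.map Y) (hid'' : μ.map Y'' = μ.map Y)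
    (hcm : Countermonotonic μ X Y') (hco : Comonotonic μ X Y'')
    (g₁ g₂ : ℝ → ℝ) (hg₁ : Monotone g₁) (hg₂ : Monotone g₂)
    (hiX : Integrable (fun ω => g₁ (X ω)) μ)
    (hiY : Integrable (fun ω => g₂ (Y ω)) μ)
    (hiY' : Integrable (fun ω => g₂ (Y' ω)) μ)
    (hiY'' : Integrable (fun ω => g₂ (Y'' ω)) μ)
    (hiP' : Integrable (fun ω => g₁ (X ω) * g₂ (Y' ω)) μ)
    (hiP'' : Integrable (fun ω => g₁ (X ω) * g₂ (Y'' ω)) μ)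
    (hncX : ∀ c : ℝ, ¬ ((fun ω => g₁ (X ω)) =ᵐ[μ] fun _ => c))
    (hncY : ∀ c : ℝ, ¬ ((fun ω => g₂ (Y ω)) =ᵐ[μ] fun _ => c)) :
    covar μ (fun ω => g₁ (X ω)) (fun ω => g₂ (Y' ω)) < 0 ∧
    0 < covar μ (fun ω => g₁ (X ω)) (fun ω => g₂ (Y'' ω)) := by
  have not_const : ∀ {W : Ω → ℝ}, Measurable W → μ.map W = μ.map Y → ∀ c : ℝ,
      ¬ ((fun ω => g₂ (W ω)) =ᵐ[μ] fun _ => c) := fun hW hid c h =>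
    hncY c (IdentDistrib.ae_eq_const
      ((IdentDistrib.mk hY.aemeasurable hW.aemeasurable hid.symm).comp hg₂.measurable) h)
  constructor
  · obtain ⟨Z, ν₁, ν₂, hZ, hν₁, hν₂, hmap⟩ := hcm
    have hpair : IdentDistrib (fun ω => (X ω, Y' ω)) (fun ω => (ν₁ (Z ω), ν₂ (Z ω))) μ μ :=
      ⟨(hX.prodMk hY').aemeasurable,
        ((hν₁.measurable.comp hZ).prodMk (hν₂.measurable.comp hZ)).aemeasurable, hmap⟩
    have hg : Measurable fun p : ℝ × ℝ => (g₁ p.1, -g₂ p.2) :=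
      (hg₁.measurable.comp measurable_fst).prodMk (hg₂.measurable.comp measurable_snd).neg
    have hmono : Monovary (fun ω => -g₂ (ν₂ (Z ω))) (fun ω => g₁ (ν₁ (Z ω))) :=
      fun ω ω' h => neg_le_neg (hg₂ (hν₂ ((hg₁.comp hν₁).reflect_lt h).le))
    have hpos : 0 < covar μ (fun ω => g₁ (X ω)) (fun ω => -g₂ (Y' ω)) := by
      refine covar_pos_of_identDistrib_monovary (hpair.comp hg) hmono hiX hiY'.neg ?_ hncX ?_
      · simp only [mul_neg]
        exact hiP'.neg
      · intro c h
        refine not_const hY' hid' (-c) ?_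
        filter_upwards [h] with ω hω
        exact neg_eq_iff_eq_neg.1 hω
    rw [covar_neg_right] at hpos
    exact neg_pos.1 hpos
  · obtain ⟨Z, ν₁, ν₂, hZ, hν₁, hν₂, hmap⟩ := hco
    have hpair : IdentDistrib (fun ω => (X ω, Y'' ω)) (fun ω => (ν₁ (Z ω), ν₂ (Z ω))) μ μ :=
      ⟨(hX.prodMk hY'').aemeasurable,
        ((hν₁.measurable.comp hZ).prodMk (hν₂.measurable.comp hZ)).aemeasurable, hmap⟩
    have hg : Measurable fun p : ℝ × ℝ => (g₁ p.1, g₂ p.2) :=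
      (hg₁.measurable.comp measurable_fst).prodMk (hg₂.measurable.comp measurable_snd)
    have hmono : Monovary (fun ω => g₂ (ν₂ (Z ω))) (fun ω => g₁ (ν₁ (Z ω))) :=
      fun ω ω' h => hg₂ (hν₂ ((hg₁.comp hν₁).reflect_lt h).le)
    exact covar_pos_of_identDistrib_monovary (hpair.comp hg) hmono hiX hiY'' hiP'' hncX
      (not_const hY'' hid'')
end

section
/- Let X, Y be real random variables on a common probability space. Then (X,Y) is countermonotonic if and only if P(X ≤ a, Y ≤ b) = max(F_X(a) + F_Y(b) − 1, 0) for all a, b ∈ ℝ, i.e., if and only if the CDF correlation of X and Y is identically equal to −1 (the joint CDF attains the lower Fréchet–Hoeffding bound everywhere). -/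
open MeasureTheory

/-- The CDF of a real random variable `X` under `μ`. -/
noncomputable def cdfF {Ω : Type*} [MeasurableSpace Ω] (μ : Measure Ω)
    (X : Ω → ℝ) (x : ℝ) : ℝ :=
  (μ {ω | X ω ≤ x}).toReal

/-- The lower Fréchet–Hoeffding bound for two events is attained iff one of the events
`A ∩ B`, `Aᶜ ∩ Bᶜ` is null. -/
lemma measureReal_inter_eq_max_iff {Ω : Type*} [MeasurableSpace Ω] (μ : Measure Ω)
    [IsProbabilityMeasure μ] {A B : Set Ω} (hA : MeasurableSet A) (hB : MeasurableSet B) :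
    μ.real (A ∩ B) = max (μ.real A + μ.real B - 1) 0 ↔
      μ (A ∩ B) = 0 ∨ μ (Aᶜ ∩ Bᶜ) = 0 := by
  have hunion : μ.real (A ∪ B) + μ.real (A ∩ B) = μ.real A + μ.real B :=
    measureReal_union_add_inter hB
  have hcompl : μ.real (Aᶜ ∩ Bᶜ) = 1 - μ.real (A ∪ B) := by
    rw [← Set.compl_union, probReal_compl_eq_one_sub (hA.union hB)]
  have hinter_nonneg : 0 ≤ μ.real (A ∩ B) := measureReal_nonneg
  have hcompl_nonneg : 0 ≤ μ.real (Aᶜ ∩ Bᶜ) := measureReal_nonneg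
  rw [← measureReal_eq_zero_iff, ← measureReal_eq_zero_iff]
  constructor
  · intro h
    rcases max_choice (μ.real A + μ.real B - 1) 0 with hm | hm
    · right; linarith
    · left; linarith
  · rintro (h | h)
    · rw [max_eq_right (by linarith), h]
    · rw [max_eq_left (by linarith)]; linarith

/-- A nondecreasing 1-Lipschitz dependence of `f` on `z` extends to a monotone function on `ℝ`. -/
lemma exists_monotone_forall_eq {ι : Type*} (z f : ι → ℝ)
    (h : ∀ i j, f i ≤ f j + max (z i - z j) 0) :
    ∃ g : ℝ → ℝ, Monotone g ∧ ∀ i, g (z i) = f i := by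
  rcases isEmpty_or_nonempty ι with hι | ⟨⟨i₀⟩⟩
  · exact ⟨id, monotone_id, fun i => hι.elim i⟩
  have hne : Nonempty ι := ⟨i₀⟩
  have hbdd (t : ℝ) : BddBelow (Set.range fun j => f j + max (t - z j) 0) := by
    refine ⟨f i₀ - |t - z i₀|, ?_⟩
    rintro _ ⟨j, rfl⟩
    have := h i₀ j
    grind
  refine ⟨fun t => ⨅ j, (f j + max (t - z j) 0), ?_, ?_⟩
  · intro s t hst
    exact ciInf_mono (hbdd s) fun j => by gcongr
  · intro i
    refine le_antisymm ((ciInf_le (hbdd (z i)) i).trans_eq (by simp)) ?_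
    exact le_ciInf fun j => h i j

/-- If one of the opposite quadrants at every point is null, then almost surely the values
of `(X, Y)` are oppositely ordered. -/
lemma exists_ae_forall_oppositely_ordered {Ω : Type*} [MeasurableSpace Ω] (μ : Measure Ω)
    (X Y : Ω → ℝ)
    (h : ∀ a b : ℝ, μ ({ω | X ω ≤ a} ∩ {ω | Y ω ≤ b}) = 0 ∨
      μ ({ω | X ω ≤ a}ᶜ ∩ {ω | Y ω ≤ b}ᶜ) = 0) :
    ∃ S : Set Ω, (∀ᵐ ω ∂μ, ω ∈ S) ∧ ∀ ω ∈ S, ∀ ω' ∈ S, X ω < X ω' → Y ω' ≤ Y ω := by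
  have hN (p : ℚ × ℚ) : ∃ N : Set Ω, μ N = 0 ∧
      (N = {ω | X ω ≤ p.1} ∩ {ω | Y ω ≤ p.2} ∨
        N = {ω | X ω ≤ p.1}ᶜ ∩ {ω | Y ω ≤ p.2}ᶜ) := by
    rcases h p.1 p.2 with h | h
    · exact ⟨_, h, .inl rfl⟩
    · exact ⟨_, h, .inr rfl⟩
  choose N hN0 hN using hN
  refine ⟨{ω | ∀ p, ω ∉ N p}, ae_all_iff.2 fun p => measure_eq_zero_iff_ae_notMem.1 (hN0 p), ?_⟩
  intro ω hω ω' hω' hX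
  by_contra! hY
  obtain ⟨a, ha, ha'⟩ := exists_rat_btwn hX
  obtain ⟨b, hb, hb'⟩ := exists_rat_btwn hY
  rcases hN (a, b) with hab | hab
  · exact hω (a, b) (hab ▸ ⟨ha.le, hb.le⟩)
  · exact hω' (a, b) (hab ▸ ⟨ha'.not_ge, hb'.not_ge⟩)

theorem countermonotonic_iff_lower_frechet_hoeffding
    {Ω : Type*} [MeasurableSpace Ω] (μ : Measure Ω) [IsProbabilityMeasure μ]
    (X Y : Ω → ℝ) (hX : Measurable X) (hY : Measurable Y) :
    Countermonotonic μ X Y ↔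
      ∀ a b : ℝ, (μ {ω | X ω ≤ a ∧ Y ω ≤ b}).toReal
        = max (cdfF μ X a + cdfF μ Y b - 1) 0 := by
  have key (a b : ℝ) : (μ {ω | X ω ≤ a ∧ Y ω ≤ b}).toReal
        = max (cdfF μ X a + cdfF μ Y b - 1) 0 ↔
      μ ({ω | X ω ≤ a} ∩ {ω | Y ω ≤ b}) = 0 ∨
        μ ({ω | X ω ≤ a}ᶜ ∩ {ω | Y ω ≤ b}ᶜ) = 0 :=
    measureReal_inter_eq_max_iff μ (measurableSet_le hX measurable_const)
      (measurableSet_le hY measurable_const)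
  simp only [key]
  constructor
  · rintro ⟨Z, ν₁, ν₂, hZ, hν₁, hν₂, hlaw⟩ a b
    have hmeas : Measurable fun ω => (ν₁ (Z ω), ν₂ (Z ω)) :=
      (hν₁.measurable.comp hZ).prodMk (hν₂.measurable.comp hZ)
    have heq (s t : Set ℝ) (hs : MeasurableSet s) (ht : MeasurableSet t) :
        μ (X ⁻¹' s ∩ Y ⁻¹' t) = μ ((ν₁ ∘ Z) ⁻¹' s ∩ (ν₂ ∘ Z) ⁻¹' t) := by
      have := congrArg (fun m => m (s ×ˢ t)) hlaw
      simp only [Measure.map_apply (hX.prodMk hY) (hs.prod ht),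
        Measure.map_apply hmeas (hs.prod ht)] at this
      exact this
    have hle := heq (Set.Iic a) (Set.Iic b) measurableSet_Iic measurableSet_Iic
    have hgt := heq (Set.Iic a)ᶜ (Set.Iic b)ᶜ measurableSet_Iic.compl measurableSet_Iic.compl
    change μ (X ⁻¹' Set.Iic a ∩ Y ⁻¹' Set.Iic b) = 0 ∨
      μ (X ⁻¹' (Set.Iic a)ᶜ ∩ Y ⁻¹' (Set.Iic b)ᶜ) = 0
    rw [hle, hgt]
    by_cases hab : ∃ z, ν₁ z ≤ a ∧ ν₂ z ≤ b
    · obtain ⟨z, hza, hzb⟩ := hab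
      right
      convert measure_empty (μ := μ)
      refine Set.eq_empty_of_forall_notMem fun ω ⟨hωa, hωb⟩ => ?_
      rcases le_total (Z ω) z with h | h
      · exact hωa ((hν₁ h).trans hza)
      · exact hωb ((hν₂ h).trans hzb)
    · left
      convert measure_empty (μ := μ)
      exact Set.eq_empty_of_forall_notMem fun ω hω => hab ⟨Z ω, hω⟩
  · intro h
    obtain ⟨S, hS, hord⟩ := exists_ae_forall_oppositely_ordered μ X Y h
    have hord' (i j : S) :
        (X i ≤ X j ∧ Y j ≤ Y i) ∨ (X j ≤ X i ∧ Y i ≤ Y j) := by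
      have := hord i i.2 j j.2
      have := hord j j.2 i i.2
      grind
    obtain ⟨ν₁, hν₁, hν₁X⟩ := exists_monotone_forall_eq (fun i : S => X i - Y i) (fun i => X i)
      fun i j => by have := hord' i j; grind
    obtain ⟨ν₂, hν₂, hν₂Y⟩ := exists_monotone_forall_eq (fun i : S => X i - Y i) (fun i => -Y i)
      fun i j => by have := hord' i j; grind
    refine ⟨fun ω => X ω - Y ω, ν₁, fun t => -ν₂ t, hX.sub hY, hν₁, hν₂.neg, ?_⟩
    refine Measure.map_congr ?_
    filter_upwards [hS] with ω hω
    have h₁ := hν₁X ⟨ω, hω⟩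
    have h₂ := hν₂Y ⟨ω, hω⟩
    simp only at h₁ h₂
    rw [h₁, h₂, neg_neg]
end

section
/- Let X, Y be real random variables on a common probability space. Then X and Y are independent if and only if the quantile covariance vanishes at all levels, i.e., if and only if P(X ≤ q_α(X), Y ≤ q_β(Y)) = F_X(q_α(X))·F_Y(q_β(Y)) for all α, β ∈ (0,1). -/
open MeasureTheory

/-- The lower α-quantile of `X` under `μ`. -/
noncomputable def lquant {Ω : Type*} [MeasurableSpace Ω] (μ : Measure Ω)
    (X : Ω → ℝ) (α : ℝ) : ℝ :=
  sInf {x : ℝ | α ≤ cdfF μ X x}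

open ProbabilityTheory Filter Topology

section Quantile

variable {Ω : Type*} [MeasurableSpace Ω] {μ : Measure Ω} [IsProbabilityMeasure μ] {X Y : Ω → ℝ}

lemma cdfF_eq_cdf_map (hX : Measurable X) (x : ℝ) : cdfF μ X x = cdf (μ.map X) x := by
  have := Measure.isProbabilityMeasure_map (μ := μ) hX.aemeasurable
  rw [cdf_eq_real, map_measureReal_apply hX measurableSet_Iic]
  rfl

lemma bddBelow_setOf_le_cdfF (hX : Measurable X) {α : ℝ} (hα : 0 < α) :
    BddBelow {x : ℝ | α ≤ cdfF μ X x} := by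
  obtain ⟨b, hb⟩ := ((tendsto_cdf_atBot (μ.map X)).eventually_lt_const hα).exists
  refine ⟨b, fun x hx ↦ le_of_not_gt fun hxb ↦ ?_⟩
  rw [Set.mem_ofPred_eq, cdfF_eq_cdf_map hX] at hx
  exact (hx.trans (monotone_cdf _ hxb.le)).not_gt hb

lemma le_cdfF_lquant (hX : Measurable X) {α x : ℝ} (hx : α ≤ cdfF μ X x) :
    α ≤ cdfF μ X (lquant μ X α) := by
  rw [cdfF_eq_cdf_map hX]
  have hright : Tendsto (cdf (μ.map X)) (𝓝[>] lquant μ X α)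
      (𝓝 (cdf (μ.map X) (lquant μ X α))) :=
    ((cdf (μ.map X)).right_continuous _).mono_left (nhdsWithin_mono _ Set.Ioi_subset_Ici_self)
  refine ge_of_tendsto hright ?_
  filter_upwards [self_mem_nhdsWithin] with z hz
  obtain ⟨w, hw, hwz⟩ := exists_lt_of_csInf_lt ⟨x, hx⟩ (Set.mem_Ioi.mp hz)
  rw [Set.mem_ofPred_eq, cdfF_eq_cdf_map hX] at hw
  exact hw.trans (monotone_cdf _ hwz.le)

/-- A sublevel set of `X` of positive measure agrees almost everywhere with the one at the
quantile of its own level. -/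
lemma setOf_le_lquant_cdfF_ae_eq (hX : Measurable X) {x : ℝ} (hx : 0 < cdfF μ X x) :
    ({ω | X ω ≤ lquant μ X (cdfF μ X x)} : Set Ω) =ᵐ[μ] {ω | X ω ≤ x} := by
  have hle : lquant μ X (cdfF μ X x) ≤ x :=
    csInf_le (bddBelow_setOf_le_cdfF hX hx) (le_refl (cdfF μ X x))
  refine ae_eq_of_subset_of_measure_ge (fun ω hω ↦ le_trans hω hle) ?_
    (hX measurableSet_Iic).nullMeasurableSet (measure_ne_top _ _)
  exact (ENNReal.toReal_le_toReal (measure_ne_top _ _) (measure_ne_top _ _)).mp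
    (le_cdfF_lquant hX le_rfl)

lemma measure_inter_eq_mul_of_measure_eq_zero_or_one {s t : Set Ω} (hs : MeasurableSet s)
    (h : μ s = 0 ∨ μ s = 1) : μ (s ∩ t) = μ s * μ t := by
  rcases h with h | h
  · rw [h, zero_mul, measure_inter_null_of_null_left _ h]
  · rw [h, one_mul]
    have hs1 : s =ᵐ[μ] Set.univ := eventuallyEq_univ.mpr ((mem_ae_iff_prob_eq_one hs).mpr h)
    simpa using measure_congr (hs1.inter (ae_eq_refl t))

lemma measure_eq_zero_or_one_or_cdfF_mem_Ioo (X : Ω → ℝ) (x : ℝ) :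
    (μ {ω | X ω ≤ x} = 0 ∨ μ {ω | X ω ≤ x} = 1) ∨ cdfF μ X x ∈ Set.Ioo (0 : ℝ) 1 := by
  by_cases h0 : μ {ω | X ω ≤ x} = 0
  · exact .inl (.inl h0)
  by_cases h1 : μ {ω | X ω ≤ x} = 1
  · exact .inl (.inr h1)
  refine .inr ⟨ENNReal.toReal_pos h0 (measure_ne_top _ _), ?_⟩
  rw [cdfF, ← ENNReal.toReal_one]
  exact (ENNReal.toReal_lt_toReal (measure_ne_top _ _) ENNReal.one_ne_top).mpr
    (lt_of_le_of_ne prob_le_one h1)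

lemma indepFun_of_measure_Iic_inter_eq_mul (hX : Measurable X) (hY : Measurable Y)
    (h : ∀ x y, μ ({ω | X ω ≤ x} ∩ {ω | Y ω ≤ y}) = μ {ω | X ω ≤ x} * μ {ω | Y ω ≤ y}) :
    IndepFun X Y μ := by
  have hgen : ∀ Z : Ω → ℝ, MeasurableSpace.comap Z inferInstance =
      MeasurableSpace.generateFrom (Set.preimage Z '' Set.range Set.Iic) := fun Z ↦ by
    rw [← MeasurableSpace.comap_generateFrom, ← borel_eq_generateFrom_Iic ℝ,
      BorelSpace.measurable_eq (α := ℝ)]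
  rw [IndepFun_iff_Indep]
  refine IndepSets.indep hX.comap_le hY.comap_le (isPiSystem_Iic.comap X) (isPiSystem_Iic.comap Y)
    (hgen X) (hgen Y) ?_
  rw [IndepSets_iff]
  rintro _ _ ⟨_, ⟨x, rfl⟩, rfl⟩ ⟨_, ⟨y, rfl⟩, rfl⟩
  exact h x y

end Quantile

theorem indepFun_iff_quantile_covariance_vanishes
    {Ω : Type*} [MeasurableSpace Ω] (μ : Measure Ω) [IsProbabilityMeasure μ]
    (X Y : Ω → ℝ) (hX : Measurable X) (hY : Measurable Y) :
    ProbabilityTheory.IndepFun X Y μ ↔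
      ∀ α ∈ Set.Ioo (0 : ℝ) 1, ∀ β ∈ Set.Ioo (0 : ℝ) 1,
        (μ {ω | X ω ≤ lquant μ X α ∧ Y ω ≤ lquant μ Y β}).toReal
          = cdfF μ X (lquant μ X α) * cdfF μ Y (lquant μ Y β) := by
  constructor
  · intro h α _ β _
    rw [cdfF, cdfF, ← ENNReal.toReal_mul]
    exact congrArg ENNReal.toReal
      (h.measure_inter_preimage_eq_mul _ _ measurableSet_Iic measurableSet_Iic)
  · refine fun h ↦ indepFun_of_measure_Iic_inter_eq_mul hX hY fun x y ↦ ?_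
    rcases measure_eq_zero_or_one_or_cdfF_mem_Ioo (μ := μ) X x with hx | hx
    · exact measure_inter_eq_mul_of_measure_eq_zero_or_one (hX measurableSet_Iic) hx
    rcases measure_eq_zero_or_one_or_cdfF_mem_Ioo (μ := μ) Y y with hy | hy
    · rw [Set.inter_comm, mul_comm]
      exact measure_inter_eq_mul_of_measure_eq_zero_or_one (hY measurableSet_Iic) hy
    have hXae := setOf_le_lquant_cdfF_ae_eq hX hx.1
    have hYae := setOf_le_lquant_cdfF_ae_eq hY hy.1
    rw [← measure_congr (hXae.inter hYae), ← measure_congr hXae, ← measure_congr hYae]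
    have hxy := h _ hx _ hy
    rw [cdfF.eq_1 μ X (lquant _ _ _), cdfF.eq_1 μ Y (lquant _ _ _), ← ENNReal.toReal_mul] at hxy
    exact (ENNReal.toReal_eq_toReal_iff' (measure_ne_top _ _)
      (ENNReal.mul_ne_top (measure_ne_top _ _) (measure_ne_top _ _))).mp hxy
end

section
/- Let X, Y be real random variables on a common probability space and let g₁, g₂ : ℝ → ℝ be nondecreasing functions such that g₁∘X, g₂∘Y, and (g₁∘X)·(g₂∘Y) are integrable. If X and Y are globally positively dependent, then Cov(g₁∘X, g₂∘Y) ≥ 0; if X and Y are globally negatively dependent, then Cov(g₁∘X, g₂∘Y) ≤ 0. In particular, every generalised covariance Cov_{T₁,T₂}(X,Y) is nonnegative (nonpositive) under global positive (negative) dependence. -/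
open MeasureTheory

open Filter Topology in
/-- The mass of a product of lower sets is the limit of the masses of the closed quadrants
with corners in it. -/
lemma tendsto_measure_quadrant_of_isLowerSet {α : Type*} [MeasurableSpace α] (μ : Measure α)
    (X Y : α → ℝ) {L M : Set ℝ} (hL : IsLowerSet L) (hM : IsLowerSet M) :
    Tendsto (fun p : L × M => μ {ω | X ω ≤ p.1 ∧ Y ω ≤ p.2}) atTop
      (𝓝 (μ {ω | X ω ∈ L ∧ Y ω ∈ M})) := by
  have := hL.ordConnected
  have := hM.ordConnected
  have hunion : {ω | X ω ∈ L ∧ Y ω ∈ M}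
      = ⋃ p : L × M, {ω | X ω ≤ p.1 ∧ Y ω ≤ p.2} := by
    ext ω
    simp only [Set.mem_ofPred_eq, Set.mem_iUnion]
    constructor
    · rintro ⟨hx, hy⟩
      exact ⟨(⟨_, hx⟩, ⟨_, hy⟩), le_rfl, le_rfl⟩
    · rintro ⟨p, hx, hy⟩
      exact ⟨hL hx p.1.2, hM hy p.2.2⟩
  rw [hunion]
  refine tendsto_measure_iUnion_atTop fun p q hpq ω hω => ?_
  exact ⟨hω.1.trans hpq.1, hω.2.trans hpq.2⟩

/-- Domination of the masses of closed quadrants extends to products of lower sets. -/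
lemma measure_le_of_isLowerSet_of_quadrant_le {α β : Type*} [MeasurableSpace α]
    [MeasurableSpace β] {μ : Measure α} {ν : Measure β} {X Y : α → ℝ} {X' Y' : β → ℝ}
    (h : ∀ a b : ℝ, μ {ω | X ω ≤ a ∧ Y ω ≤ b} ≤ ν {ω | X' ω ≤ a ∧ Y' ω ≤ b})
    {L M : Set ℝ} (hL : IsLowerSet L) (hM : IsLowerSet M) :
    μ {ω | X ω ∈ L ∧ Y ω ∈ M} ≤ ν {ω | X' ω ∈ L ∧ Y' ω ∈ M} := by
  rcases L.eq_empty_or_nonempty with rfl | hLne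
  · simp
  rcases M.eq_empty_or_nonempty with rfl | hMne
  · simp
  have := hLne.to_subtype
  have := hMne.to_subtype
  exact le_of_tendsto_of_tendsto' (tendsto_measure_quadrant_of_isLowerSet μ X Y hL hM)
    (tendsto_measure_quadrant_of_isLowerSet ν X' Y' hL hM) fun p => h p.1 p.2

/-- A two-dimensional layer-cake formula for the product of the lower deviations from `c`. -/
lemma lintegral_ofReal_sub_mul_ofReal_sub {α : Type*} [MeasurableSpace α] (μ : Measure α)
    [SFinite μ] {U V : α → ℝ} (hU : Measurable U) (hV : Measurable V) (c : ℝ) :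
    ∫⁻ ω, ENNReal.ofReal (c - U ω) * ENNReal.ofReal (c - V ω) ∂μ
      = ∫⁻ p : ℝ × ℝ in Set.Iio c ×ˢ Set.Iio c, μ {ω | U ω ≤ p.1 ∧ V ω ≤ p.2} := by
  set S : Set (α × (ℝ × ℝ)) := {q | U q.1 ≤ q.2.1 ∧ V q.1 ≤ q.2.2} with hS_def
  have hS : MeasurableSet S :=
    (measurableSet_le (hU.comp measurable_fst) measurable_snd.fst).inter
      (measurableSet_le (hV.comp measurable_fst) measurable_snd.snd)
  have hsymm := Measure.prod_apply_symm (μ := μ)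
    (ν := (volume : Measure (ℝ × ℝ)).restrict (Set.Iio c ×ˢ Set.Iio c)) hS
  rw [Measure.prod_apply hS] at hsymm
  refine Eq.trans (lintegral_congr fun ω => ?_) hsymm
  have hslice : Prod.mk ω ⁻¹' S ∩ Set.Iio c ×ˢ Set.Iio c
      = Set.Ico (U ω) c ×ˢ Set.Ico (V ω) c := by
    ext p
    simp only [hS_def, Set.mem_inter_iff, Set.mem_preimage, Set.mem_ofPred_eq, Set.mem_prod,
      Set.mem_Iio, Set.mem_Ico]
    tauto
  rw [Measure.restrict_apply (measurable_prodMk_left hS), hslice, Measure.volume_eq_prod,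
    Measure.prod_prod, Real.volume_Ico, Real.volume_Ico]

lemma abs_min_le_abs_of_nonneg {u c : ℝ} (hc : 0 ≤ c) : |min u c| ≤ |u| := by
  rcases le_total u c with h | h
  · rw [min_eq_left h]
  · rw [min_eq_right h, abs_of_nonneg hc]
    exact h.trans (le_abs_self u)

lemma integrable_min_mul_min {α : Type*} [MeasurableSpace α] {μ : Measure α} {U V : α → ℝ}
    (hU : Measurable U) (hV : Measurable V) (hUV : Integrable (fun ω => U ω * V ω) μ)
    {c : ℝ} (hc : 0 ≤ c) : Integrable (fun ω => min (U ω) c * min (V ω) c) μ := by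
  refine hUV.mono (by fun_prop) (ae_of_all _ fun ω => ?_)
  simp only [Real.norm_eq_abs, abs_mul]
  exact mul_le_mul (abs_min_le_abs_of_nonneg hc) (abs_min_le_abs_of_nonneg hc) (abs_nonneg _)
    (abs_nonneg _)

lemma tendsto_integral_min_mul_min {α : Type*} [MeasurableSpace α] {μ : Measure α}
    {U V : α → ℝ} (hU : Measurable U) (hV : Measurable V)
    (hUV : Integrable (fun ω => U ω * V ω) μ) :
    Filter.Tendsto (fun n : ℕ => ∫ ω, min (U ω) n * min (V ω) n ∂μ) Filter.atTop
      (nhds (∫ ω, U ω * V ω ∂μ)) := by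
  refine tendsto_integral_of_dominated_convergence (fun ω => ‖U ω * V ω‖)
    (fun n => by fun_prop) hUV.norm (fun n => ae_of_all _ fun ω => ?_)
    (ae_of_all _ fun ω => ?_)
  · simp only [Real.norm_eq_abs, abs_mul]
    exact mul_le_mul (abs_min_le_abs_of_nonneg n.cast_nonneg)
      (abs_min_le_abs_of_nonneg n.cast_nonneg) (abs_nonneg _) (abs_nonneg _)
  · refine tendsto_const_nhds.congr' ?_
    filter_upwards [tendsto_natCast_atTop_atTop.eventually_ge_atTop (U ω),
      tendsto_natCast_atTop_atTop.eventually_ge_atTop (V ω)] with n hu hv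
    rw [min_eq_left hu, min_eq_left hv]

/-- The mixed moment of the truncations at `c`, in terms of the lower deviations from `c`. -/
lemma integral_min_mul_min_eq {α : Type*} [MeasurableSpace α] {μ : Measure α}
    [IsProbabilityMeasure μ] {U V : α → ℝ} (hU : Measurable U) (hV : Measurable V)
    (hiU : Integrable U μ) (hiV : Integrable V μ)
    (hUV : Integrable (fun ω => U ω * V ω) μ) {c : ℝ} (hc : 0 ≤ c) :
    Integrable (fun ω => (c - min (U ω) c) * (c - min (V ω) c)) μ ∧
    ∫ ω, min (U ω) c * min (V ω) c ∂μ
      = ∫ ω, (c - min (U ω) c) * (c - min (V ω) c) ∂μ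
        + (c * ∫ ω, min (U ω) c ∂μ) + (c * ∫ ω, min (V ω) c ∂μ) - c * c := by
  have hmU : Integrable (fun ω => min (U ω) c) μ := hiU.inf (integrable_const c)
  have hmV : Integrable (fun ω => min (V ω) c) μ := hiV.inf (integrable_const c)
  have hmUV := integrable_min_mul_min hU hV hUV hc
  have hexpand : (fun ω => (c - min (U ω) c) * (c - min (V ω) c)) = fun ω =>
      min (U ω) c * min (V ω) c - c * min (U ω) c - c * min (V ω) c + c * c := by
    funext ω
    ring
  have h₁ := hmUV.sub (hmU.const_mul c)
  have h₂ := h₁.sub (hmV.const_mul c)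
  rw [hexpand]
  refine ⟨h₂.add (integrable_const _), ?_⟩
  rw [integral_add (by exact h₂) (integrable_const _),
    integral_sub (by exact h₁) (hmV.const_mul c),
    integral_sub hmUV (hmU.const_mul c), integral_const_mul, integral_const_mul, integral_const, probReal_univ,
    one_smul]
  ring

/-- If two pairs of random variables have the same marginals and the joint distribution function
of the first is dominated by that of the second, then so is its mixed moment. -/
lemma integral_mul_le_of_quadrant_le {α β : Type*} [MeasurableSpace α] [MeasurableSpace β]
    {μ : Measure α} {ν : Measure β} [IsProbabilityMeasure μ] [IsProbabilityMeasure ν]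
    {U V : α → ℝ} {U' V' : β → ℝ}
    (hU : Measurable U) (hV : Measurable V) (hU' : Measurable U') (hV' : Measurable V')
    (hiU : Integrable U μ) (hiV : Integrable V μ) (hUV : Integrable (fun ω => U ω * V ω) μ)
    (hUV' : Integrable (fun ω => U' ω * V' ω) ν)
    (hidU : ProbabilityTheory.IdentDistrib U U' μ ν)
    (hidV : ProbabilityTheory.IdentDistrib V V' μ ν)
    (h : ∀ s t : ℝ, μ {ω | U ω ≤ s ∧ V ω ≤ t} ≤ ν {ω | U' ω ≤ s ∧ V' ω ≤ t}) :
    ∫ ω, U ω * V ω ∂μ ≤ ∫ ω, U' ω * V' ω ∂ν := by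
  refine le_of_tendsto_of_tendsto' (tendsto_integral_min_mul_min hU hV hUV)
    (tendsto_integral_min_mul_min hU' hV' hUV') fun n => ?_
  have hn : (0 : ℝ) ≤ n := n.cast_nonneg
  obtain ⟨hint, heq⟩ := integral_min_mul_min_eq hU hV hiU hiV hUV hn
  obtain ⟨hint', heq'⟩ := integral_min_mul_min_eq hU' hV' (hidU.integrable_iff.1 hiU)
    (hidV.integrable_iff.1 hiV) hUV' hn
  have hmin : Measurable fun x : ℝ => min x (n : ℝ) := by fun_prop
  have hmU : ∫ ω, min (U ω) n ∂μ = ∫ ω, min (U' ω) n ∂ν := (hidU.comp hmin).integral_eq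
  have hmV : ∫ ω, min (V ω) n ∂μ = ∫ ω, min (V' ω) n ∂ν := (hidV.comp hmin).integral_eq
  have hnonneg : ∀ u v : ℝ, 0 ≤ (n - min u n) * (n - min v n) := fun u v =>
    mul_nonneg (sub_nonneg.2 (min_le_right _ _)) (sub_nonneg.2 (min_le_right _ _))
  have hofReal : ∀ u v : ℝ, ENNReal.ofReal ((n - min u n) * (n - min v n))
      = ENNReal.ofReal (n - u) * ENNReal.ofReal (n - v) := by
    have hsub : ∀ u : ℝ, ENNReal.ofReal (n - min u n) = ENNReal.ofReal (n - u) := by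
      intro u
      rcases le_total u n with hu | hu
      · rw [min_eq_left hu]
      · rw [min_eq_right hu, sub_self, ENNReal.ofReal_zero,
          ENNReal.ofReal_of_nonpos (sub_nonpos.2 hu)]
    intro u v
    rw [ENNReal.ofReal_mul (sub_nonneg.2 (min_le_right _ _)), hsub, hsub]
  have hdev : ∫ ω, (n - min (U ω) n) * (n - min (V ω) n) ∂μ
      ≤ ∫ ω, (n - min (U' ω) n) * (n - min (V' ω) n) ∂ν := by
    rw [← ENNReal.ofReal_le_ofReal_iff (integral_nonneg fun ω => hnonneg _ _),
      ofReal_integral_eq_lintegral_ofReal hint (ae_of_all _ fun ω => hnonneg _ _),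
      ofReal_integral_eq_lintegral_ofReal hint' (ae_of_all _ fun ω => hnonneg _ _)]
    simp only [hofReal]
    rw [lintegral_ofReal_sub_mul_ofReal_sub μ hU hV,
      lintegral_ofReal_sub_mul_ofReal_sub ν hU' hV']
    exact lintegral_mono fun p => h p.1 p.2
  rw [heq, heq', hmU, hmV]
  linarith

theorem generalised_covariance_sign_under_global_dependence
    {Ω : Type*} [MeasurableSpace Ω] (μ : Measure Ω) [IsProbabilityMeasure μ]
    (X Y : Ω → ℝ) (hX : Measurable X) (hY : Measurable Y)
    (g₁ g₂ : ℝ → ℝ) (hg₁ : Monotone g₁) (hg₂ : Monotone g₂)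
    (hiX : Integrable (fun ω => g₁ (X ω)) μ)
    (hiY : Integrable (fun ω => g₂ (Y ω)) μ)
    (hiP : Integrable (fun ω => g₁ (X ω) * g₂ (Y ω)) μ) :
    ((∀ a b : ℝ, cdfF μ X a * cdfF μ Y b ≤ (μ {ω | X ω ≤ a ∧ Y ω ≤ b}).toReal) →
      0 ≤ covar μ (fun ω => g₁ (X ω)) (fun ω => g₂ (Y ω))) ∧
    ((∀ a b : ℝ, (μ {ω | X ω ≤ a ∧ Y ω ≤ b}).toReal ≤ cdfF μ X a * cdfF μ Y b) →
      covar μ (fun ω => g₁ (X ω)) (fun ω => g₂ (Y ω)) ≤ 0) := by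
  have hU : Measurable fun ω => g₁ (X ω) := hg₁.measurable.comp hX
  have hV : Measurable fun ω => g₂ (Y ω) := hg₂.measurable.comp hY
  have hU' : Measurable fun p : Ω × Ω => g₁ (X p.1) := hU.comp measurable_fst
  have hV' : Measurable fun p : Ω × Ω => g₂ (Y p.2) := hV.comp measurable_snd
  have hidU : ProbabilityTheory.IdentDistrib (fun p : Ω × Ω => g₁ (X p.1))
      (fun ω => g₁ (X ω)) (μ.prod μ) μ :=
    ⟨hU'.aemeasurable, hU.aemeasurable,
      ((hU.measurePreserving μ).comp measurePreserving_fst).map_eq⟩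
  have hidV : ProbabilityTheory.IdentDistrib (fun p : Ω × Ω => g₂ (Y p.2))
      (fun ω => g₂ (Y ω)) (μ.prod μ) μ :=
    ⟨hV'.aemeasurable, hV.aemeasurable,
      ((hV.measurePreserving μ).comp measurePreserving_snd).map_eq⟩
  have hlower : ∀ {g : ℝ → ℝ}, Monotone g → ∀ s, IsLowerSet {x | g x ≤ s} :=
    fun hg s x y hyx hx => (hg hyx).trans hx
  have hprod : ∀ a b : ℝ, (μ.prod μ {p | X p.1 ≤ a ∧ Y p.2 ≤ b}).toReal
      = cdfF μ X a * cdfF μ Y b := by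
    intro a b
    rw [cdfF, cdfF, ← ENNReal.toReal_mul, ← Measure.prod_prod]
    rfl
  simp only [covar, ← integral_prod_mul (μ := μ) (ν := μ) (fun ω => g₁ (X ω))
    (fun ω => g₂ (Y ω)), sub_nonneg, sub_nonpos, ← hprod,
    ENNReal.toReal_le_toReal (measure_ne_top _ _) (measure_ne_top _ _)]
  constructor
  · intro h
    exact integral_mul_le_of_quadrant_le hU' hV' hU hV (hidU.integrable_iff.2 hiX)
      (hidV.integrable_iff.2 hiY) (hiX.mul_prod hiY) hiP hidU hidV fun s t =>
        measure_le_of_isLowerSet_of_quadrant_le h (hlower hg₁ s) (hlower hg₂ t)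
  · intro h
    exact integral_mul_le_of_quadrant_le hU hV hU' hV' hiX hiY hiP (hiX.mul_prod hiY)
      hidU.symm hidV.symm fun s t =>
        measure_le_of_isLowerSet_of_quadrant_le h (hlower hg₁ s) (hlower hg₂ t)
end

section
/- Let X, Y be real random variables on a common probability space and let ν be a finite Borel measure on ℝ² that is strictly positive (i.e., ν(U) > 0 for every nonempty open U ⊆ ℝ²). If ∫_{ℝ²} (P(X ≤ a, Y ≤ b) − F_X(a)·F_Y(b)) dν(a,b) = ∫_{ℝ²} (min(F_X(a), F_Y(b)) − F_X(a)·F_Y(b)) dν(a,b), then (X,Y) is comonotonic. (That is, a summary correlation induced by CDF covariance with respect to a strictly positive weight measure equals 1 only for comonotonic pairs.) -/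
open MeasureTheory

/-- A function that is nondecreasing and `1`-Lipschitz as a function of `Z` factors through `Z` by
a nondecreasing function defined on all of `ℝ`. -/
theorem exists_monotone_factor {ι : Type*} [Nonempty ι] (f Z : ι → ℝ)
    (h : ∀ s t, f s ≤ f t + max (Z s - Z t) 0) :
    ∃ g : ℝ → ℝ, Monotone g ∧ ∀ s, g (Z s) = f s := by
  have bound : ∀ z t s, f s - max (Z s - z) 0 ≤ f t + max (z - Z t) 0 := fun z t s => by
    have := h s t
    grind
  have bdd : ∀ z, BddAbove (Set.range fun s => f s - max (Z s - z) 0) := fun z =>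
    ⟨f (Classical.arbitrary ι) + max (z - Z (Classical.arbitrary ι)) 0, by
      rintro _ ⟨s, rfl⟩
      exact bound z _ s⟩
  refine ⟨fun z => ⨆ s, (f s - max (Z s - z) 0), fun z w hzw => ?_, fun s => ?_⟩
  · refine ciSup_mono (bdd w) fun s => ?_
    gcongr
  · refine le_antisymm (ciSup_le fun t => ?_) ?_
    · simpa using bound (Z s) s t
    · simpa using le_ciSup (bdd (Z s)) s

/-- If almost surely `X` and `Y` never order two outcomes in opposite ways, then `(X, Y)` is
comonotonic, with `X + Y` as the common source of randomness. -/
theorem comonotonic_of_ae_not_discordant {Ω : Type*} [MeasurableSpace Ω] (μ : Measure Ω)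
    [IsProbabilityMeasure μ] (X Y : Ω → ℝ) (hX : Measurable X) (hY : Measurable Y)
    (S : Set Ω) (hS : ∀ᵐ ω ∂μ, ω ∈ S)
    (h : ∀ s ∈ S, ∀ t ∈ S, ¬ (X s < X t ∧ Y t < Y s)) :
    Comonotonic μ X Y := by
  obtain ⟨ω₀, hω₀⟩ := hS.exists
  have : Nonempty S := ⟨⟨ω₀, hω₀⟩⟩
  obtain ⟨f, hf, hfX⟩ := exists_monotone_factor (fun s : S => X s) (fun s => X s + Y s) (by
    rintro ⟨s, hs⟩ ⟨t, ht⟩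
    have := h s hs t ht
    have := h t ht s hs
    grind)
  obtain ⟨g, hg, hgY⟩ := exists_monotone_factor (fun s : S => Y s) (fun s => X s + Y s) (by
    rintro ⟨s, hs⟩ ⟨t, ht⟩
    have := h s hs t ht
    have := h t ht s hs
    grind)
  refine ⟨fun ω => X ω + Y ω, f, g, hX.add hY, hf, hg, Measure.map_congr ?_⟩
  filter_upwards [hS] with ω hω
  exact Prod.ext (hfX ⟨ω, hω⟩).symm (hgY ⟨ω, hω⟩).symm

theorem measurable_cdfF {Ω : Type*} [MeasurableSpace Ω] (μ : Measure Ω) [IsFiniteMeasure μ]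
    (X : Ω → ℝ) : Measurable (cdfF μ X) :=
  Monotone.measurable fun _ _ hab =>
    measureReal_mono fun _ hω => le_trans (Set.mem_ofPred.1 hω) hab

theorem measurable_jointCDF {Ω : Type*} [MeasurableSpace Ω] (μ : Measure Ω) [IsFiniteMeasure μ]
    {X Y : Ω → ℝ} (hX : Measurable X) (hY : Measurable Y) :
    Measurable fun p : ℝ × ℝ => (μ {ω | X ω ≤ p.1 ∧ Y ω ≤ p.2}).toReal := by
  have hs : MeasurableSet {q : (ℝ × ℝ) × Ω | X q.2 ≤ q.1.1 ∧ Y q.2 ≤ q.1.2} :=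
    (measurableSet_le (hX.comp measurable_snd) measurable_fst.fst).inter
      (measurableSet_le (hY.comp measurable_snd) measurable_fst.snd)
  exact (measurable_measure_prodMk_left hs).ennreal_toReal

theorem jointCDF_le_min {Ω : Type*} [MeasurableSpace Ω] (μ : Measure Ω) [IsFiniteMeasure μ]
    (X Y : Ω → ℝ) (a b : ℝ) :
    (μ {ω | X ω ≤ a ∧ Y ω ≤ b}).toReal ≤ min (cdfF μ X a) (cdfF μ Y b) :=
  le_min (measureReal_mono fun _ hω => hω.1) (measureReal_mono fun _ hω => hω.2)

theorem cdfF_mem_Icc {Ω : Type*} [MeasurableSpace Ω] (μ : Measure Ω) [IsProbabilityMeasure μ]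
    (X : Ω → ℝ) (a : ℝ) : cdfF μ X a ∈ Set.Icc 0 1 :=
  ⟨measureReal_nonneg, measureReal_le_one⟩

/-- Where the joint CDF attains its upper bound, one of the two off-diagonal quadrants is null. -/
theorem ae_quadrant_of_jointCDF_eq_min {Ω : Type*} [MeasurableSpace Ω] (μ : Measure Ω)
    [IsFiniteMeasure μ] {X Y : Ω → ℝ} (hX : Measurable X) (hY : Measurable Y) {a b : ℝ}
    (h : (μ {ω | X ω ≤ a ∧ Y ω ≤ b}).toReal = min (cdfF μ X a) (cdfF μ Y b)) :
    (∀ᵐ ω ∂μ, X ω ≤ a → Y ω ≤ b) ∨ (∀ᵐ ω ∂μ, Y ω ≤ b → X ω ≤ a) := by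
  have hm : MeasurableSet {ω | X ω ≤ a ∧ Y ω ≤ b} :=
    (measurableSet_le hX measurable_const).inter (measurableSet_le hY measurable_const)
  rcases min_choice (cdfF μ X a) (cdfF μ Y b) with hmin | hmin
  · rw [hmin, cdfF, ENNReal.toReal_eq_toReal_iff' (by finiteness) (by finiteness)] at h
    have := ae_eq_of_subset_of_measure_ge (fun _ hω => hω.1) h.ge hm.nullMeasurableSet
      (by finiteness)
    left
    filter_upwards [this.mem_iff] with ω hω hXa
    exact (hω.2 hXa).2
  · rw [hmin, cdfF, ENNReal.toReal_eq_toReal_iff' (by finiteness) (by finiteness)] at h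
    have := ae_eq_of_subset_of_measure_ge (fun _ hω => hω.2) h.ge hm.nullMeasurableSet
      (by finiteness)
    right
    filter_upwards [this.mem_iff] with ω hω hYb
    exact (hω.2 hYb).1

/-- If the joint CDF attains its upper bound on a dense set of points, then the pair is
comonotonic. -/
theorem comonotonic_of_dense_jointCDF_eq_min {Ω : Type*} [MeasurableSpace Ω] (μ : Measure Ω)
    [IsProbabilityMeasure μ] {X Y : Ω → ℝ} (hX : Measurable X) (hY : Measurable Y)
    (h : Dense {p : ℝ × ℝ | (μ {ω | X ω ≤ p.1 ∧ Y ω ≤ p.2}).toReal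
      = min (cdfF μ X p.1) (cdfF μ Y p.2)}) :
    Comonotonic μ X Y := by
  obtain ⟨D, hDsub, hDc, hD⟩ := h.exists_countable_dense_subset
  let S : Set Ω := {ω | ∀ p ∈ D, ((∀ᵐ ω' ∂μ, X ω' ≤ p.1 → Y ω' ≤ p.2) → X ω ≤ p.1 → Y ω ≤ p.2) ∧
    ((∀ᵐ ω' ∂μ, Y ω' ≤ p.2 → X ω' ≤ p.1) → Y ω ≤ p.2 → X ω ≤ p.1)}
  refine comonotonic_of_ae_not_discordant μ X Y hX hY S ?_ ?_
  · refine (ae_ball_iff hDc).2 fun p _ => Filter.Eventually.and ?_ ?_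
    · exact Filter.eventually_imp_distrib_left.2 id
    · exact Filter.eventually_imp_distrib_left.2 id
  · rintro s hs t ht ⟨hXst, hYts⟩
    obtain ⟨p, ⟨hp₁, hp₂⟩, hpD⟩ := hD.inter_open_nonempty
      (Set.Ioo (X s) (X t) ×ˢ Set.Ioo (Y t) (Y s)) (isOpen_Ioo.prod isOpen_Ioo)
      ((Set.nonempty_Ioo.2 hXst).prod (Set.nonempty_Ioo.2 hYts))
    rcases ae_quadrant_of_jointCDF_eq_min μ hX hY (hDsub hpD) with hae | hae
    · exact hp₂.2.not_ge ((hs p hpD).1 hae hp₁.1.le)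
    · exact hp₁.2.not_ge ((ht p hpD).2 hae hp₂.1.le)

theorem summary_correlation_one_implies_comonotonic
    {Ω : Type*} [MeasurableSpace Ω] (μ : Measure Ω) [IsProbabilityMeasure μ]
    (X Y : Ω → ℝ) (hX : Measurable X) (hY : Measurable Y)
    (ν : Measure (ℝ × ℝ)) [IsFiniteMeasure ν]
    (hpos : ∀ U : Set (ℝ × ℝ), IsOpen U → U.Nonempty → 0 < ν U)
    (heq : ∫ p : ℝ × ℝ,
        ((μ {ω | X ω ≤ p.1 ∧ Y ω ≤ p.2}).toReal - cdfF μ X p.1 * cdfF μ Y p.2) ∂ν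
      = ∫ p : ℝ × ℝ,
        (min (cdfF μ X p.1) (cdfF μ Y p.2) - cdfF μ X p.1 * cdfF μ Y p.2) ∂ν) :
    Comonotonic μ X Y := by
  have hF : Measurable fun p : ℝ × ℝ => cdfF μ X p.1 := (measurable_cdfF μ X).comp measurable_fst
  have hG : Measurable fun p : ℝ × ℝ => cdfF μ Y p.2 := (measurable_cdfF μ Y).comp measurable_snd
  have hH := measurable_jointCDF μ hX hY
  have hFG : Integrable (fun p : ℝ × ℝ => cdfF μ X p.1 * cdfF μ Y p.2) ν := by
    refine Integrable.of_mem_Icc 0 1 (hF.mul hG).aemeasurable (ae_of_all _ fun p => ?_)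
    have hx := cdfF_mem_Icc μ X p.1
    have hy := cdfF_mem_Icc μ Y p.2
    exact ⟨mul_nonneg hx.1 hy.1, mul_le_one₀ hx.2 hy.1 hy.2⟩
  have hHint : Integrable (fun p : ℝ × ℝ => (μ {ω | X ω ≤ p.1 ∧ Y ω ≤ p.2}).toReal) ν :=
    Integrable.of_mem_Icc 0 1 hH.aemeasurable
      (ae_of_all _ fun p => ⟨measureReal_nonneg, measureReal_le_one⟩)
  have hMint : Integrable (fun p : ℝ × ℝ => min (cdfF μ X p.1) (cdfF μ Y p.2)) ν := by
    refine Integrable.of_mem_Icc 0 1 (hF.min hG).aemeasurable (ae_of_all _ fun p => ?_)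
    have hx := cdfF_mem_Icc μ X p.1
    have hy := cdfF_mem_Icc μ Y p.2
    exact ⟨le_min hx.1 hy.1, min_le_of_left_le hx.2⟩
  rw [integral_sub hHint hFG, integral_sub hMint hFG, sub_left_inj,
    integral_eq_iff_of_ae_le hHint hMint (ae_of_all _ fun p => jointCDF_le_min μ X Y p.1 p.2)]
    at heq
  have : ν.IsOpenPosMeasure := ⟨fun U hU hne => (hpos U hU hne).ne'⟩
  exact comonotonic_of_dense_jointCDF_eq_min μ hX hY (Measure.dense_of_ae heq)
end

section
/- Let X, Y be real random variables on a common probability space such that X, Y, and XY are integrable. Then the function (a,b) ↦ P(X ≤ a, Y ≤ b) − F_X(a)·F_Y(b) is Lebesgue-integrable on ℝ² and ∫_{ℝ²} (P(X ≤ a, Y ≤ b) − F_X(a)·F_Y(b)) da db = Cov(X,Y). In other words, the summary covariance induced by CDF covariance with respect to Lebesgue measure equals the classical covariance. -/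
open MeasureTheory

/-- The centred threshold kernel `1_{x ≤ a} - 1_{0 ≤ a}`, whose integral in `a` is `-x`. -/
noncomputable def thresholdKernel (x a : ℝ) : ℝ :=
  (if x ≤ a then 1 else 0) - (if 0 ≤ a then 1 else 0)

lemma thresholdKernel_of_nonpos {x : ℝ} (hx : x ≤ 0) :
    thresholdKernel x = (Set.Ico x 0).indicator (fun _ => (1 : ℝ)) := by
  funext a
  simp only [thresholdKernel, Set.indicator_apply, Set.mem_Ico]
  grind

lemma thresholdKernel_of_nonneg {x : ℝ} (hx : 0 ≤ x) :
    thresholdKernel x = (Set.Ico 0 x).indicator (fun _ => (-1 : ℝ)) := by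
  funext a
  simp only [thresholdKernel, Set.indicator_apply, Set.mem_Ico]
  grind

lemma measurable_thresholdKernel_uncurry :
    Measurable (fun p : ℝ × ℝ => thresholdKernel p.1 p.2) :=
  (Measurable.ite (measurableSet_le measurable_fst measurable_snd)
    measurable_const measurable_const).sub
  (Measurable.ite (measurableSet_le measurable_const measurable_snd)
    measurable_const measurable_const)

lemma integrable_thresholdKernel (x : ℝ) : Integrable (thresholdKernel x) := by
  rcases le_total x 0 with hx | hx
  · rw [thresholdKernel_of_nonpos hx, integrable_indicator_iff measurableSet_Ico]
    exact integrableOn_const (by simp)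
  · rw [thresholdKernel_of_nonneg hx, integrable_indicator_iff measurableSet_Ico]
    exact integrableOn_const (by simp)

lemma integral_thresholdKernel (x : ℝ) : ∫ a, thresholdKernel x a = -x := by
  rcases le_total x 0 with hx | hx
  · rw [thresholdKernel_of_nonpos hx, integral_indicator measurableSet_Ico]
    simp [hx]
  · rw [thresholdKernel_of_nonneg hx, integral_indicator measurableSet_Ico]
    simp [hx]

lemma integral_norm_thresholdKernel (x : ℝ) : ∫ a, ‖thresholdKernel x a‖ = |x| := by
  rcases le_total x 0 with hx | hx
  · simp_rw [thresholdKernel_of_nonpos hx, norm_indicator_eq_indicator_norm]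
    rw [integral_indicator measurableSet_Ico]
    simp [hx, abs_of_nonpos]
  · simp_rw [thresholdKernel_of_nonneg hx, norm_indicator_eq_indicator_norm]
    rw [integral_indicator measurableSet_Ico]
    simp [hx, abs_of_nonneg]

section

variable {Ω : Type*} [MeasurableSpace Ω] {μ : Measure Ω} {X Y : Ω → ℝ}

lemma integrable_thresholdKernel_prod [SFinite μ] (hX : Measurable X) (hXi : Integrable X μ) :
    Integrable (fun q : Ω × ℝ => thresholdKernel (X q.1) q.2) (μ.prod volume) := by
  have hm : Measurable (fun q : Ω × ℝ => thresholdKernel (X q.1) q.2) :=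
    measurable_thresholdKernel_uncurry.comp ((hX.comp measurable_fst).prodMk measurable_snd)
  refine (integrable_prod_iff hm.aestronglyMeasurable).2
    ⟨.of_forall fun ω => integrable_thresholdKernel (X ω), ?_⟩
  simpa only [integral_norm_thresholdKernel] using hXi.abs

lemma integrable_thresholdKernel_mul_prod [SFinite μ] (hX : Measurable X) (hY : Measurable Y)
    (hXYi : Integrable (fun ω => X ω * Y ω) μ) :
    Integrable (fun q : Ω × (ℝ × ℝ) =>
      thresholdKernel (X q.1) q.2.1 * thresholdKernel (Y q.1) q.2.2) (μ.prod volume) := by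
  have hm : Measurable (fun q : Ω × (ℝ × ℝ) =>
      thresholdKernel (X q.1) q.2.1 * thresholdKernel (Y q.1) q.2.2) :=
    (measurable_thresholdKernel_uncurry.comp
      ((hX.comp measurable_fst).prodMk (measurable_fst.comp measurable_snd))).mul
    (measurable_thresholdKernel_uncurry.comp
      ((hY.comp measurable_fst).prodMk (measurable_snd.comp measurable_snd)))
  refine (integrable_prod_iff hm.aestronglyMeasurable).2
    ⟨.of_forall fun ω =>
      (integrable_thresholdKernel (X ω)).mul_prod (integrable_thresholdKernel (Y ω)), ?_⟩
  refine hXYi.abs.congr (.of_forall fun ω => ?_)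
  simp only [norm_mul, Measure.volume_eq_prod]
  rw [integral_prod_mul (fun a => ‖thresholdKernel (X ω) a‖) (fun b => ‖thresholdKernel (Y ω) b‖),
    integral_norm_thresholdKernel, integral_norm_thresholdKernel, abs_mul]

lemma integral_integral_thresholdKernel [SFinite μ] (hX : Measurable X) (hXi : Integrable X μ) :
    ∫ a, ∫ ω, thresholdKernel (X ω) a ∂μ = -∫ ω, X ω ∂μ := by
  rw [← integral_integral_swap (f := fun ω a => thresholdKernel (X ω) a)
    (integrable_thresholdKernel_prod hX hXi)]
  simp_rw [integral_thresholdKernel, integral_neg]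

lemma integral_integral_thresholdKernel_mul [SFinite μ] (hX : Measurable X) (hY : Measurable Y)
    (hXYi : Integrable (fun ω => X ω * Y ω) μ) :
    ∫ p : ℝ × ℝ, ∫ ω, thresholdKernel (X ω) p.1 * thresholdKernel (Y ω) p.2 ∂μ =
      ∫ ω, X ω * Y ω ∂μ := by
  rw [← integral_integral_swap
    (f := fun ω (p : ℝ × ℝ) => thresholdKernel (X ω) p.1 * thresholdKernel (Y ω) p.2)
    (integrable_thresholdKernel_mul_prod hX hY hXYi)]
  simp_rw [Measure.volume_eq_prod, integral_prod_mul (thresholdKernel _) (thresholdKernel _),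
    integral_thresholdKernel, neg_mul_neg]

/-- Threshold covariance is unchanged when the indicators are shifted by constants. -/
lemma thresholdCov_eq_integral_thresholdKernel [IsProbabilityMeasure μ]
    (hX : Measurable X) (hY : Measurable Y) (a b : ℝ) :
    (μ {ω | X ω ≤ a ∧ Y ω ≤ b}).toReal - cdfF μ X a * cdfF μ Y b =
      ∫ ω, thresholdKernel (X ω) a * thresholdKernel (Y ω) b ∂μ -
        (∫ ω, thresholdKernel (X ω) a ∂μ) * ∫ ω, thresholdKernel (Y ω) b ∂μ := by
  have hA : MeasurableSet {ω | X ω ≤ a} := measurableSet_le hX measurable_const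
  have hB : MeasurableSet {ω | Y ω ≤ b} := measurableSet_le hY measurable_const
  have key : ∀ {s : Set Ω}, MeasurableSet s →
      Integrable (s.indicator fun _ => (1 : ℝ)) μ ∧
        ∫ ω, s.indicator (fun _ => (1 : ℝ)) ω ∂μ = (μ s).toReal := fun hs =>
    ⟨(integrable_const _).indicator hs, by
      rw [integral_indicator hs]; simp [Measure.real]⟩
  obtain ⟨iA, eA⟩ := key hA
  obtain ⟨iB, eB⟩ := key hB
  obtain ⟨iAB, eAB⟩ := key (hA.inter hB)
  set c : ℝ := if 0 ≤ a then 1 else 0 with hc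
  set d : ℝ := if 0 ≤ b then 1 else 0 with hd
  have kX : ∀ ω, thresholdKernel (X ω) a = {ω | X ω ≤ a}.indicator (fun _ => (1 : ℝ)) ω - c :=
    fun ω => by simp [thresholdKernel, Set.indicator_apply, hc]
  have kY : ∀ ω, thresholdKernel (Y ω) b = {ω | Y ω ≤ b}.indicator (fun _ => (1 : ℝ)) ω - d :=
    fun ω => by simp [thresholdKernel, Set.indicator_apply, hd]
  have kXY : ∀ ω, thresholdKernel (X ω) a * thresholdKernel (Y ω) b =
      ({ω | X ω ≤ a} ∩ {ω | Y ω ≤ b}).indicator (fun _ => (1 : ℝ)) ω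
        - d * {ω | X ω ≤ a}.indicator (fun _ => (1 : ℝ)) ω
        - c * {ω | Y ω ≤ b}.indicator (fun _ => (1 : ℝ)) ω + c * d := fun ω => by
    rw [kX, kY]
    by_cases h₁ : X ω ≤ a <;> by_cases h₂ : Y ω ≤ b <;> simp [h₁, h₂] <;> ring
  simp_rw [kXY, kX, kY]
  rw [integral_add (by exact (iAB.sub (iA.const_mul d)).sub (iB.const_mul c)) (integrable_const _),
    integral_sub (by exact iAB.sub (iA.const_mul d)) (iB.const_mul c),
    integral_sub iAB (iA.const_mul d), integral_const_mul, integral_const_mul,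
    integral_sub iA (integrable_const _), integral_sub iB (integrable_const _), eA, eB, eAB]
  simp only [integral_const, probReal_univ, smul_eq_mul, cdfF, Set.ofPred_and]
  ring

end

theorem summary_CDF_covariance_wrt_lebesgue_is_covariance
    {Ω : Type*} [MeasurableSpace Ω] (μ : Measure Ω) [IsProbabilityMeasure μ]
    (X Y : Ω → ℝ) (hX : Measurable X) (hY : Measurable Y)
    (hXi : Integrable X μ) (hYi : Integrable Y μ)
    (hXYi : Integrable (fun ω => X ω * Y ω) μ) :
    Integrable (fun p : ℝ × ℝ =>
      (μ {ω | X ω ≤ p.1 ∧ Y ω ≤ p.2}).toReal - cdfF μ X p.1 * cdfF μ Y p.2) volume ∧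
    ∫ p : ℝ × ℝ,
        ((μ {ω | X ω ≤ p.1 ∧ Y ω ≤ p.2}).toReal - cdfF μ X p.1 * cdfF μ Y p.2)
      = covar μ X Y := by
  simp_rw [thresholdCov_eq_integral_thresholdKernel hX hY]
  have iXY := (integrable_thresholdKernel_mul_prod hX hY hXYi).integral_prod_right
  have iX := (integrable_thresholdKernel_prod hX hXi).integral_prod_right
  have iY := (integrable_thresholdKernel_prod hY hYi).integral_prod_right
  have iP := iX.mul_prod iY
  refine ⟨iXY.sub iP, ?_⟩
  rw [integral_sub iXY iP, integral_integral_thresholdKernel_mul hX hY hXYi,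
    Measure.volume_eq_prod, integral_prod_mul (fun a => ∫ ω, thresholdKernel (X ω) a ∂μ)
      (fun b => ∫ ω, thresholdKernel (Y ω) b ∂μ),
    integral_integral_thresholdKernel hX hXi, integral_integral_thresholdKernel hY hYi,
    neg_mul_neg, covar]
end
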